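/- arXiv:2603.00323 — 3 statements merged into one kernel-verified Lean document; each statement's English description precedes it below -/
import Mathlib

section
/- Let f : ℂ → ℂ be a non-constant polynomial. Then for every subset X ⊆ ℂ (with the Euclidean metric), the Nagata dimension of f(X) equals the Nagata dimension of X. -/
open Set Metric

/-- `S` is `D`-bounded with respect to the distance function `d`:
every two points of `S` are at distance at most `D`. -/
def IsBoundedBy {α : Type*} (d : α → α → ℝ) (S : Set α) (D : ℝ) : Prop :=
  ∀ x ∈ S, ∀ y ∈ S, d x y ≤ D

/-- The Nagata (Assouad–Nagata) dimension of the set `X ⊆ α` with respect to the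
distance function `d`, as an element of `ℕ∞`: the infimum of all `n : ℕ` such that
there is a constant `c > 0` so that for every `s > 0` the set `X` admits a cover by
subsets of diameter at most `c * s` such that every subset of `X` of diameter at
most `s` meets at most `n + 1` members of the cover. -/
noncomputable def nagataDimWith {α : Type*} (d : α → α → ℝ) (X : Set α) : ℕ∞ :=
  sInf {N : ℕ∞ | ∃ n : ℕ, N = (n : ℕ∞) ∧ ∃ c : ℝ, 0 < c ∧ ∀ s : ℝ, 0 < s →
    ∃ B : Set (Set α), (∀ b ∈ B, b ⊆ X) ∧ X ⊆ ⋃₀ B ∧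
      (∀ b ∈ B, IsBoundedBy d b (c * s)) ∧
      ∀ T ⊆ X, IsBoundedBy d T s → {b ∈ B | (T ∩ b).Nonempty}.encard ≤ (n : ℕ∞) + 1}

/-- The Nagata dimension of a subset of a metric space. -/
noncomputable def nagataDim {α : Type*} [PseudoMetricSpace α] (X : Set α) : ℕ∞ :=
  nagataDimWith dist X

namespace NagProof

/-- Coloured decomposition of `X` at scale `s` with pieces of size `D`, for the pullback of the
metric along `g`. -/
def Col (n : ℕ) (g : ℂ → ℂ) (X : Set ℂ) (s D : ℝ) : Prop :=
  ∃ (L : Type) (κ : ℂ → Fin (n + 1)) (l : ℂ → L),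
    (∀ x ∈ X, ∀ y ∈ X, κ x = κ y → dist (g x) (g y) ≤ s → l x = l y) ∧
    (∀ x ∈ X, ∀ y ∈ X, κ x = κ y → l x = l y → dist (g x) (g y) ≤ D)

def NN (n : ℕ) (g : ℂ → ℂ) (X : Set ℂ) : Prop :=
  ∃ c : ℝ, 0 < c ∧ ∀ s : ℝ, 0 < s → Col n g X s (c * s)

def Orig (n : ℕ) (X : Set ℂ) : Prop :=
  ∃ c : ℝ, 0 < c ∧ ∀ s : ℝ, 0 < s →
    ∃ B : Set (Set ℂ), (∀ b ∈ B, b ⊆ X) ∧ X ⊆ ⋃₀ B ∧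
      (∀ b ∈ B, IsBoundedBy dist b (c * s)) ∧
      ∀ T ⊆ X, IsBoundedBy dist T s → {b ∈ B | (T ∩ b).Nonempty}.encard ≤ (n : ℕ∞) + 1

lemma Col.mono {n : ℕ} {g : ℂ → ℂ} {X Y : Set ℂ} {s D : ℝ} (h : Col n g X s D) (hY : Y ⊆ X) :
    Col n g Y s D := by
  obtain ⟨L, κ, l, h1, h2⟩ := h
  exact ⟨L, κ, l, fun x hx y hy => h1 x (hY hx) y (hY hy),
    fun x hx y hy => h2 x (hY hx) y (hY hy)⟩

lemma NN.mono {n : ℕ} {g : ℂ → ℂ} {X Y : Set ℂ} (h : NN n g X) (hY : Y ⊆ X) : NN n g Y := by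
  obtain ⟨c, hc, h⟩ := h
  exact ⟨c, hc, fun s hs => (h s hs).mono hY⟩

lemma NN.orig {n : ℕ} {X : Set ℂ} (h : NN n id X) : Orig n X := by
  obtain ⟨c, hc, h⟩ := h
  refine ⟨c, hc, fun s hs => ?_⟩
  obtain ⟨L, κ, l, h1, h2⟩ := h s hs
  simp only [id] at h1 h2
  refine ⟨Set.range (fun q : Fin (n + 1) × L => {x ∈ X | κ x = q.1 ∧ l x = q.2}), ?_, ?_, ?_, ?_⟩
  · rintro _ ⟨q, rfl⟩ x hx
    exact hx.1
  · intro x hx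
    exact ⟨_, ⟨(κ x, l x), rfl⟩, hx, rfl, rfl⟩
  · rintro _ ⟨q, rfl⟩ x hx y hy
    exact h2 x hx.1 y hy.1 (hx.2.1.trans hy.2.1.symm) (hx.2.2.trans hy.2.2.symm)
  · intro T hT hb
    classical
    let F : Fin (n + 1) → Set ℂ := fun k =>
      {x ∈ X | κ x = k ∧ ∃ t ∈ T, κ t = k ∧ l x = l t}
    have hsub : {b ∈ Set.range (fun q : Fin (n + 1) × L => {x ∈ X | κ x = q.1 ∧ l x = q.2}) |
        (T ∩ b).Nonempty} ⊆ F '' Set.univ := by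
      rintro _ ⟨⟨q, rfl⟩, t, ht, htX, htk, htl⟩
      refine ⟨q.1, trivial, ?_⟩
      ext x
      simp only [F, Set.mem_ofPred_eq]
      constructor
      · rintro ⟨hx, hk, t', ht', hk', hl'⟩
        refine ⟨hx, hk, ?_⟩
        rw [hl', ← htl]
        exact h1 t' (hT ht') t htX (hk'.trans htk.symm) (hb t' ht' t ht)
      · rintro ⟨hx, hk, hl⟩
        exact ⟨hx, hk, t, ht, htk, hl.trans htl.symm⟩
    refine (Set.encard_le_encard hsub).trans ((Set.encard_image_le _ _).trans ?_)
    simp [Set.encard_univ]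

lemma Orig.nn {n : ℕ} {X : Set ℂ} (h : Orig n X) : NN n id X := by
  obtain ⟨c, hc, h⟩ := h
  refine ⟨c * (2 * (n + 2)) + 2 * (n + 2), by positivity, fun s hs => ?_⟩
  obtain ⟨B, hB1, hB2, hB3, hB4⟩ := h (2 * (n + 2) * s) (by positivity)
  let A : ℕ → ℂ → Set (Set ℂ) := fun j x => {b ∈ B | ∃ y ∈ b, dist x y < (j + 1 : ℝ) * s}
  have hAmono : ∀ x, ∀ i j, i ≤ j → A i x ⊆ A j x := by
    rintro x i j hij b ⟨hb, y, hy, hd⟩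
    refine ⟨hb, y, hy, hd.trans_le ?_⟩
    have : (i : ℝ) ≤ j := by exact_mod_cast hij
    gcongr
  have hne : ∀ x ∈ X, ∀ j, (A j x).Nonempty := by
    intro x hx j
    obtain ⟨b, hb, hxb⟩ := hB2 hx
    exact ⟨b, hb, x, hxb, by rw [dist_self]; positivity⟩
  have hcard : ∀ x ∈ X, (A (n + 1) x).encard ≤ (n : ℕ∞) + 1 := by
    intro x hx
    refine le_trans (Set.encard_le_encard ?_)
      (hB4 {y ∈ X | dist x y < (n + 2 : ℝ) * s} (fun y hy => hy.1) ?_)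
    · rintro b ⟨hb, y, hy, hd⟩
      refine ⟨hb, y, ⟨hB1 b hb hy, ?_⟩, hy⟩
      push_cast at hd
      linarith
    · intro y hy z hz
      have := dist_triangle_left y z x
      have h1 := hy.2
      have h2 := hz.2
      linarith
  have key : ∀ x ∈ X, ∃ j : Fin (n + 1), A j x = A (j + 1) x := by
    intro x hx
    by_contra! hcon
    have : ∀ j : ℕ, j ≤ n + 1 → (j : ℕ∞) + 1 ≤ (A j x).encard := by
      intro j
      induction j with
      | zero =>
        intro _
        simpa using Set.one_le_encard_iff_nonempty.2 (hne x hx 0)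
      | succ j ih =>
        intro hj
        have h1 := ih (by omega)
        have h2 : A j x ⊂ A (j + 1) x :=
          (hAmono x j (j + 1) (by omega)).ssubset_of_ne (hcon ⟨j, by omega⟩)
        have hfin : (A (j + 1) x).Finite := by
          apply Set.Finite.subset (s := A (n + 1) x)
          · apply Set.finite_of_encard_le_coe (k := n + 1)
            exact_mod_cast hcard x hx
          · exact hAmono x _ _ hj
        have h3 := (hfin.subset h2.subset).encard_lt_encard h2
        push_cast
        exact (add_le_add_left h1 1).trans (Order.add_one_le_of_lt h3)
    have h1 := (this (n + 1) le_rfl).trans (hcard x hx)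
    have h2 : n + 1 + 1 ≤ n + 1 := by exact_mod_cast h1
    omega
  classical
  let κ : ℂ → Fin (n + 1) := fun x => if hx : x ∈ X then (key x hx).choose else 0
  have hκ : ∀ x ∈ X, A (κ x) x = A (κ x + 1) x := by
    intro x hx
    have := (key x hx).choose_spec
    simpa only [κ, dif_pos hx] using this
  have hsub : ∀ x ∈ X, ∀ y ∈ X, κ x = κ y → dist x y ≤ s → A (κ x) x ⊆ A (κ y) y := by
    rintro x hx y hy hk hd b ⟨hb, z, hz, hdz⟩
    rw [hκ y hy]
    refine ⟨hb, z, hz, ?_⟩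
    rw [hk] at hdz
    have := dist_triangle_left y z x
    push_cast
    linarith
  refine ⟨Set (Set ℂ), κ, fun x => A (κ x) x, ?_, ?_⟩
  · intro x hx y hy hk hd
    exact (hsub x hx y hy hk hd).antisymm (hsub y hy x hx hk.symm (by simpa [dist_comm] using hd))
  · intro x hx y hy hk hl
    obtain ⟨b, hb⟩ := hne x hx (κ x)
    have hb' : b ∈ A (κ y) y := by
      have : A (κ x) x = A (κ y) y := hl
      rwa [← this]
    obtain ⟨hbB, u, hu, hdu⟩ := hb
    obtain ⟨_, v, hv, hdv⟩ := hb'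
    have h1 := hB3 b hbB u hu v hv
    have h2 := dist_triangle4 x u v y
    rw [dist_comm v y] at h2
    have h3 : ((κ x : ℕ) : ℝ) ≤ n := by exact_mod_cast Nat.lt_succ_iff.1 (κ x).2
    have h4 : ((κ y : ℕ) : ℝ) ≤ n := by exact_mod_cast Nat.lt_succ_iff.1 (κ y).2
    have h5 : (((κ x : ℕ) : ℝ) + 1) * s ≤ (n + 2) * s := by gcongr; norm_num
    have h6 : (((κ y : ℕ) : ℝ) + 1) * s ≤ (n + 2) * s := by gcongr; norm_num
    simp only [id]
    nlinarith

lemma orig_iff {n : ℕ} {X : Set ℂ} : Orig n X ↔ NN n id X := ⟨Orig.nn, NN.orig⟩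

lemma nn_image {n : ℕ} {f : ℂ → ℂ} {X : Set ℂ} : NN n id (f '' X) ↔ NN n f X := by
  constructor
  · rintro ⟨c, hc, h⟩
    refine ⟨c, hc, fun s hs => ?_⟩
    obtain ⟨L, κ, l, h1, h2⟩ := h s hs
    exact ⟨L, κ ∘ f, l ∘ f, fun x hx y hy => h1 _ ⟨x, hx, rfl⟩ _ ⟨y, hy, rfl⟩,
      fun x hx y hy => h2 _ ⟨x, hx, rfl⟩ _ ⟨y, hy, rfl⟩⟩
  · rintro ⟨c, hc, h⟩
    refine ⟨c, hc, fun s hs => ?_⟩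
    obtain ⟨L, κ, l, h1, h2⟩ := h s hs
    have hi : ∀ y ∈ f '' X, Function.invFunOn f X y ∈ X ∧ f (Function.invFunOn f X y) = y :=
      fun y hy => ⟨Function.invFunOn_mem hy, Function.invFunOn_eq hy⟩
    refine ⟨L, κ ∘ Function.invFunOn f X, l ∘ Function.invFunOn f X, ?_, ?_⟩
    · intro x hx y hy hk hd
      refine h1 _ (hi x hx).1 _ (hi y hy).1 hk ?_
      rwa [(hi x hx).2, (hi y hy).2]
    · intro x hx y hy hk hl
      have := h2 _ (hi x hx).1 _ (hi y hy).1 hk hl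
      rwa [(hi x hx).2, (hi y hy).2] at this

lemma NN.union {n : ℕ} {g : ℂ → ℂ} {X Y : Set ℂ} (hX : NN n g X) (hY : NN n g Y) :
    NN n g (X ∪ Y) := by
  classical
  obtain ⟨c, hc, hX⟩ := hX
  obtain ⟨c', hc', hY⟩ := hY
  refine ⟨2 * (c + 1) + c' * (2 * c + 3) + c, by positivity, fun s hs => ?_⟩
  obtain ⟨L, κ, l, h1, h2⟩ := hX s hs
  obtain ⟨L', κ', l', h1', h2'⟩ := hY ((2 * c + 3) * s) (by positivity)
  let K : ℂ → Fin (n + 1) := fun x => if x ∈ Y then κ' x else κ x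
  let Near : ℂ → ℂ → Prop := fun x y => y ∈ Y ∧ κ' y = K x ∧
    ((x ∈ Y ∧ y = x) ∨ (x ∈ X ∧ x ∉ Y ∧ ∃ x' ∈ X, κ x' = κ x ∧ l x' = l x ∧
      dist (g x') (g y) ≤ s))
  have hnear : ∀ x y, Near x y → dist (g x) (g y) ≤ (c + 1) * s := by
    rintro x y ⟨hy, hk, ⟨_, rfl⟩ | ⟨hx, _, x', hx', hk', hl', hd⟩⟩
    · rw [dist_self]; positivity
    · have := h2 x hx x' hx' hk'.symm hl'.symm
      have := dist_triangle (g x) (g x') (g y)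
      linarith
  have hbound : 0 ≤ c' * (2 * c + 3) * s := by positivity
  have hcs : 0 < c * s := by positivity
  let M : ℂ → L' ⊕ L := fun x =>
    if h : ∃ y, Near x y then Sum.inl (l' h.choose) else Sum.inr (l x)
  have hMl : ∀ x, (∃ y, Near x y) → ∃ y, Near x y ∧ M x = Sum.inl (l' y) := by
    intro x h
    exact ⟨h.choose, h.choose_spec, by simp only [M, dif_pos h]⟩
  have hMr : ∀ x, (¬ ∃ y, Near x y) → M x = Sum.inr (l x) := by
    intro x h
    simp only [M, dif_neg h]
  have hnotY : ∀ x, (¬ ∃ y, Near x y) → x ∉ Y := by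
    intro x h hx
    exact h ⟨x, hx, by simp [K, hx], Or.inl ⟨hx, rfl⟩⟩
  have mixed : ∀ x ∈ X ∪ Y, ∀ y ∈ X ∪ Y, K x = K y → dist (g x) (g y) ≤ s →
      (∃ z, Near x z) → ∃ z, Near y z := by
    intro x hx y hy hK hd ⟨z, hz⟩
    by_contra hcon
    have hyY := hnotY y hcon
    have hyX : y ∈ X := hy.resolve_right hyY
    apply hcon
    obtain ⟨hzY, hkz, ⟨hxY, rfl⟩ | ⟨hxX, hxY, x', hx', hk', hl', hd'⟩⟩ := hz
    · exact ⟨z, hzY, hkz.trans hK, Or.inr ⟨hyX, hyY, y, hyX, rfl, rfl, by rwa [dist_comm]⟩⟩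
    · have hK' : κ x = κ y := by simpa [K, hxY, hyY] using hK
      have := h1 x hxX y hyX hK' hd
      exact ⟨z, hzY, hkz.trans hK, Or.inr ⟨hyX, hyY, x', hx', hk'.trans hK', hl'.trans this, hd'⟩⟩
  refine ⟨L' ⊕ L, K, M, ?_, ?_⟩
  · intro x hx y hy hK hd
    by_cases hnx : ∃ z, Near x z
    · have hny := mixed x hx y hy hK hd hnx
      obtain ⟨u, hu, hMu⟩ := hMl x hnx
      obtain ⟨v, hv, hMv⟩ := hMl y hny
      rw [hMu, hMv]
      congr 1
      refine h1' u hu.1 v hv.1 (hu.2.1.trans (hK.trans hv.2.1.symm)) ?_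
      have e1 := hnear x u hu
      have e2 := hnear y v hv
      have e3 := dist_triangle4 (g u) (g x) (g y) (g v)
      rw [dist_comm (g u) (g x)] at e3
      linarith
    · have hny : ¬ ∃ z, Near y z := fun h =>
        hnx (mixed y hy x hx hK.symm (by rwa [dist_comm]) h)
      rw [hMr x hnx, hMr y hny]
      congr 1
      have hxY := hnotY x hnx
      have hyY := hnotY y hny
      exact h1 x (hx.resolve_right hxY) y (hy.resolve_right hyY)
        (by simpa [K, hxY, hyY] using hK) hd
  · intro x hx y hy hK hM
    by_cases hnx : ∃ z, Near x z
    · by_cases hny : ∃ z, Near y z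
      · obtain ⟨u, hu, hMu⟩ := hMl x hnx
        obtain ⟨v, hv, hMv⟩ := hMl y hny
        rw [hMu, hMv] at hM
        have e0 := h2' u hu.1 v hv.1 (hu.2.1.trans (hK.trans hv.2.1.symm)) (Sum.inl.inj hM)
        have e1 := hnear x u hu
        have e2 := hnear y v hv
        have e3 := dist_triangle4 (g x) (g u) (g v) (g y)
        rw [dist_comm (g v) (g y)] at e3
        nlinarith
      · obtain ⟨u, hu, hMu⟩ := hMl x hnx
        rw [hMu, hMr y hny] at hM
        cases hM
    · by_cases hny : ∃ z, Near y z
      · obtain ⟨u, hu, hMu⟩ := hMl y hny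
        rw [hMu, hMr x hnx] at hM
        cases hM
      · rw [hMr x hnx, hMr y hny] at hM
        have hxY := hnotY x hnx
        have hyY := hnotY y hny
        have := h2 x (hx.resolve_right hxY) y (hy.resolve_right hyY)
          (by simpa [K, hxY, hyY] using hK) (Sum.inr.inj hM)
        nlinarith

/-- Sparse levels. -/
lemma nn_levels {n : ℕ} {g : ℂ → ℂ} {X : Set ℂ} (lev : ℂ → ℤ) {c a C q : ℝ} (hc : 0 < c)
    (ha : 0 < a) (hC : 0 < C) (hq : 1 < q)
    (h : ∀ m : ℤ, ∀ s : ℝ, 0 < s → Col n g {x ∈ X | lev x = m} s (c * s))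
    (h1 : ∀ M : ℤ, ∀ x ∈ X, ∀ y ∈ X, lev x ≤ M → lev y ≤ M → dist (g x) (g y) ≤ C * q ^ M)
    (h2 : ∀ x ∈ X, ∀ y ∈ X, lev x < lev y → a * q ^ (lev y) ≤ dist (g x) (g y)) :
    NN n g X := by
  classical
  refine ⟨c + C / a, by positivity, fun s hs => ?_⟩
  choose L κ l hs1 hs2 using fun m => h m s hs
  obtain ⟨M, hM1, hM2⟩ := exists_mem_Ico_zpow (x := s / a) (y := q) (by positivity) hq
  rw [le_div_iff₀ ha] at hM1
  rw [div_lt_iff₀ ha] at hM2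
  have hbig : ∀ m, M < m → s < a * q ^ m := by
    intro m hm
    have : q ^ (M + 1) ≤ q ^ m := zpow_le_zpow_right₀ hq.le hm
    nlinarith
  let K : ℂ → Fin (n + 1) := fun x => if lev x ≤ M then 0 else κ (lev x) x
  let N : ℂ → Option (Σ m, L m) := fun x => if lev x ≤ M then none else some ⟨lev x, l (lev x) x⟩
  have hcs : 0 < c * s := by positivity
  have hCs : 0 < C / a * s := by positivity
  have far : ∀ x ∈ X, ∀ y ∈ X, dist (g x) (g y) ≤ s → M < lev y → ¬ lev x < lev y := by
    intro x hx y hy hd hy' hlt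
    have := h2 x hx y hy hlt
    have := hbig _ hy'
    linarith
  refine ⟨_, K, N, ?_, ?_⟩
  · intro x hx y hy hK hd
    have f1 := far x hx y hy hd
    have f2 := far y hy x hx (by rwa [dist_comm])
    by_cases hxM : lev x ≤ M
    · have hyM : lev y ≤ M := by by_contra hcon; exact f1 (by omega) (by omega)
      simp [N, hxM, hyM]
    · have hyM : ¬ lev y ≤ M := fun hcon => f2 (by omega) (by omega)
      have he : lev y = lev x := by
        have := f1 (by omega)
        have := f2 (by omega)
        omega
      simp only [K, hxM, hyM, if_false, he] at hK
      simp only [N, hxM, hyM, if_false]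
      rw [hs1 (lev x) x ⟨hx, rfl⟩ y ⟨hy, he⟩ hK hd, ← he]
  · intro x hx y hy hK hN
    by_cases hxM : lev x ≤ M
    · have hyM : lev y ≤ M := by
        by_contra hcon
        simp [N, hxM, hcon] at hN
      have := h1 M x hx y hy hxM hyM
      have e : C * q ^ M ≤ C / a * s := by
        rw [div_mul_eq_mul_div, le_div_iff₀ ha]
        nlinarith
      nlinarith
    · have hyM : ¬ lev y ≤ M := by
        intro hcon
        simp [N, hxM, hcon] at hN
      simp only [N, hxM, hyM, if_false, Option.some.injEq] at hN
      have he : lev y = lev x := (congrArg Sigma.fst hN).symm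
      simp only [K, hxM, hyM, if_false, he] at hK
      rw [he] at hN
      have hl : l (lev x) x = l (lev x) y := by simpa using hN
      have := hs2 (lev x) x ⟨hx, rfl⟩ y ⟨hy, he⟩ hK hl
      nlinarith

/-- `g` distorts distances on `X` like `(z - c) ^ (k + 1)`. -/
def Nice (g : ℂ → ℂ) (X : Set ℂ) (c : ℂ) (k : ℕ) (a b : ℝ) : Prop :=
  0 < a ∧ 0 < b ∧ ∀ z ∈ X, ∀ w ∈ X,
    a * (dist z w * max ‖z - c‖ ‖w - c‖ ^ k) ≤ dist (g z) (g w) ∧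
    dist (g z) (g w) ≤ b * (dist z w * max ‖z - c‖ ‖w - c‖ ^ k)

lemma Nice.mono {g : ℂ → ℂ} {X Y : Set ℂ} {c : ℂ} {k : ℕ} {a b : ℝ} (h : Nice g X c k a b)
    (hY : Y ⊆ X) : Nice g Y c k a b :=
  ⟨h.1, h.2.1, fun z hz w hw => h.2.2 z (hY hz) w (hY hw)⟩

lemma nice_id (X : Set ℂ) (c : ℂ) : Nice id X c 0 1 1 :=
  ⟨one_pos, one_pos, fun z _ w _ => by simp⟩

lemma nn_nice_aux {n : ℕ} {g g' : ℂ → ℂ} {X : Set ℂ} {c : ℂ} {k k' : ℕ} {a b a' b' : ℝ}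
    (hc : c ∉ X) (hg : Nice g X c k a b) (hg' : Nice g' X c k' a' b') (h : NN n g' X)
    (hpar : ∀ x ∈ X, ∀ y ∈ X, Int.log 2 ‖x - c‖ < Int.log 2 ‖y - c‖ →
      Int.log 2 ‖x - c‖ + 2 ≤ Int.log 2 ‖y - c‖) : NN n g X := by
  obtain ⟨ha, hb, hg⟩ := hg
  obtain ⟨ha', hb', hg'⟩ := hg'
  obtain ⟨e, he, h⟩ := h
  have hpos : ∀ x ∈ X, 0 < ‖x - c‖ := by
    intro x hx
    rw [norm_pos_iff, sub_ne_zero]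
    rintro rfl
    exact hc hx
  have hlow : ∀ x ∈ X, (2 : ℝ) ^ (Int.log 2 ‖x - c‖) ≤ ‖x - c‖ := fun x hx => by
    exact_mod_cast Int.zpow_log_le_self (b := 2) (by norm_num) (hpos x hx)
  have hup : ∀ x ∈ X, ‖x - c‖ < (2 : ℝ) ^ (Int.log 2 ‖x - c‖ + 1) := fun x hx => by
    exact_mod_cast Int.lt_zpow_succ_log_self (b := 2) (by norm_num) ‖x - c‖
  have hq : ∀ M : ℤ, ((2 : ℝ) ^ (k + 1)) ^ M = ((2 : ℝ) ^ M) ^ (k + 1) := by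
    intro M
    rw [← zpow_natCast, ← zpow_natCast, zpow_comm]
  refine nn_levels (fun x => Int.log 2 ‖x - c‖)
    (c := e * (b * b' * 2 ^ k * 2 ^ k' / (a * a'))) (a := a / 2) (C := b * 4 * 2 ^ k)
    (q := 2 ^ (k + 1)) (by positivity) (by positivity) (by positivity)
    (one_lt_pow₀ (by norm_num) (by omega)) ?_ ?_ ?_
  · intro m s hs
    have hP : (0 : ℝ) < 2 ^ m := by positivity
    set P : ℝ := 2 ^ m with hPdef
    obtain ⟨L, κ, l, h1, h2⟩ := h (b' * (2 * P) ^ k' * s / (a * P ^ k)) (by positivity)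
    have hmax : ∀ x ∈ {x ∈ X | Int.log 2 ‖x - c‖ = m}, ∀ y ∈ {x ∈ X | Int.log 2 ‖x - c‖ = m},
        P ≤ max ‖x - c‖ ‖y - c‖ ∧ max ‖x - c‖ ‖y - c‖ ≤ 2 * P := by
      rintro x ⟨hx, hxm⟩ y ⟨hy, hym⟩
      have e1 := hlow x hx
      have e2 := hup x hx
      have e3 := hup y hy
      rw [hxm] at e1 e2
      rw [hym] at e3
      rw [zpow_add_one₀ (by norm_num)] at e2 e3
      exact ⟨le_max_of_le_left e1, max_le (by linarith) (by linarith)⟩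
    refine ⟨L, κ, l, ?_, ?_⟩
    · intro x hx y hy hk hd
      refine h1 x hx.1 y hy.1 hk ?_
      obtain ⟨m1, m2⟩ := hmax x hx y hy
      have u1 := (hg x hx.1 y hy.1).1
      have u2 := (hg' x hx.1 y hy.1).2
      have v1 : a * (dist x y * P ^ k) ≤ s := by
        refine le_trans ?_ (u1.trans hd)
        gcongr
      have v2 : dist (g' x) (g' y) ≤ b' * (dist x y * (2 * P) ^ k') := by
        refine u2.trans ?_
        gcongr
      refine v2.trans ?_
      rw [le_div_iff₀ (by positivity)]
      have : 0 ≤ b' * (2 * P) ^ k' := by positivity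
      nlinarith
    · intro x hx y hy hk hl
      have hd := h2 x hx.1 y hy.1 hk hl
      obtain ⟨m1, m2⟩ := hmax x hx y hy
      have u1 := (hg' x hx.1 y hy.1).1
      have u2 := (hg x hx.1 y hy.1).2
      have v1 : a' * (dist x y * P ^ k') ≤ e * (b' * (2 * P) ^ k' * s / (a * P ^ k)) := by
        refine le_trans ?_ (u1.trans hd)
        gcongr
      have v2 : dist (g x) (g y) ≤ b * (dist x y * (2 * P) ^ k) := by
        refine u2.trans ?_
        gcongr
      refine v2.trans ?_
      have v3 : dist x y ≤ e * (b' * (2 * P) ^ k' * s / (a * P ^ k)) / (a' * P ^ k') := by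
        rw [le_div_iff₀ (by positivity)]
        linarith
      calc b * (dist x y * (2 * P) ^ k)
          ≤ b * (e * (b' * (2 * P) ^ k' * s / (a * P ^ k)) / (a' * P ^ k') * (2 * P) ^ k) := by
            gcongr
        _ = _ := by
            rw [mul_pow, mul_pow]
            field_simp
  · intro M x hx y hy hxM hyM
    have hx2 := (hup x hx).trans_le (zpow_le_zpow_right₀ (by norm_num : (1 : ℝ) ≤ 2)
      (by simpa using hxM : Int.log 2 ‖x - c‖ + 1 ≤ M + 1))
    have hy2 := (hup y hy).trans_le (zpow_le_zpow_right₀ (by norm_num : (1 : ℝ) ≤ 2)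
      (by simpa using hyM : Int.log 2 ‖y - c‖ + 1 ≤ M + 1))
    rw [zpow_add_one₀ (by norm_num)] at hx2 hy2
    have hP : (0 : ℝ) < 2 ^ M := by positivity
    rw [hq]
    set P : ℝ := 2 ^ M with hPdef
    have hd : dist x y ≤ 4 * P := by
      have := dist_triangle_right x y c
      rw [dist_eq_norm x c, dist_eq_norm y c] at this
      linarith
    have hm : max ‖x - c‖ ‖y - c‖ ≤ 2 * P := max_le (by linarith) (by linarith)
    refine ((hg x hx y hy).2).trans ?_
    calc b * (dist x y * max ‖x - c‖ ‖y - c‖ ^ k) ≤ b * ((4 * P) * (2 * P) ^ k) := by gcongr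
      _ = _ := by rw [mul_pow, pow_succ]; ring
  · intro x hx y hy hlt
    have hlt2 := hpar x hx y hy hlt
    have hx2 := (hup x hx).trans_le (zpow_le_zpow_right₀ (by norm_num : (1 : ℝ) ≤ 2)
      (by linarith : Int.log 2 ‖x - c‖ + 1 ≤ Int.log 2 ‖y - c‖ - 1))
    have hy2 := hlow y hy
    rw [zpow_sub_one₀ (by norm_num)] at hx2
    beta_reduce
    rw [hq]
    have hP : (0 : ℝ) < 2 ^ (Int.log 2 ‖y - c‖) := by positivity
    set P : ℝ := 2 ^ (Int.log 2 ‖y - c‖) with hPdef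
    have hd : P / 2 ≤ dist x y := by
      have := dist_triangle_left y c x
      rw [dist_eq_norm x c, dist_eq_norm y c] at this
      linarith
    refine le_trans ?_ ((hg x hx y hy).1)
    calc a / 2 * P ^ (k + 1) = a * (P / 2 * P ^ k) := by rw [pow_succ]; ring
      _ ≤ _ := by
        gcongr
        exact le_max_of_le_right hy2

lemma nn_nice {n : ℕ} {g g' : ℂ → ℂ} {X : Set ℂ} {c : ℂ} {k k' : ℕ} {a b a' b' : ℝ}
    (hc : c ∉ X) (hg : Nice g X c k a b) (hg' : Nice g' X c k' a' b') (h : NN n g' X) :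
    NN n g X := by
  have key : ∀ r : ℤ, NN n g {x ∈ X | Int.log 2 ‖x - c‖ % 2 = r} := by
    intro r
    have hsub : {x ∈ X | Int.log 2 ‖x - c‖ % 2 = r} ⊆ X := fun x hx => hx.1
    refine nn_nice_aux (fun hx => hc hx.1) (hg.mono hsub) (hg'.mono hsub) (h.mono hsub) ?_
    rintro x ⟨_, hx⟩ y ⟨_, hy⟩ hlt
    omega
  refine ((key 0).union (key 1)).mono ?_
  intro x hx
  rcases Int.emod_two_eq_zero_or_one (Int.log 2 ‖x - c‖) with h | h
  · exact Or.inl ⟨hx, h⟩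
  · exact Or.inr ⟨hx, h⟩

/-- `S` is good for `f` if `f` preserves dimension of all subsets of `S`. -/
def Good (f : ℂ → ℂ) (S : Set ℂ) : Prop :=
  ∀ X ⊆ S, ∀ n, NN n id X ↔ NN n f X

lemma Good.mono {f : ℂ → ℂ} {S T : Set ℂ} (h : Good f T) (hS : S ⊆ T) : Good f S :=
  fun X hX n => h X (hX.trans hS) n

lemma Good.union {f : ℂ → ℂ} {S T : Set ℂ} (hS : Good f S) (hT : Good f T) :
    Good f (S ∪ T) := by
  intro X hX n
  have hX' : X ⊆ (X ∩ S) ∪ (X ∩ T) := by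
    rw [← Set.inter_union_distrib_left]
    exact Set.subset_inter le_rfl hX
  constructor
  · intro h
    exact (((hS (X ∩ S) Set.inter_subset_right n).1 (h.mono Set.inter_subset_left)).union
      ((hT (X ∩ T) Set.inter_subset_right n).1 (h.mono Set.inter_subset_left))).mono hX'
  · intro h
    exact (((hS (X ∩ S) Set.inter_subset_right n).2 (h.mono Set.inter_subset_left)).union
      ((hT (X ∩ T) Set.inter_subset_right n).2 (h.mono Set.inter_subset_left))).mono hX'

lemma good_of_nice {f : ℂ → ℂ} {S : Set ℂ} {c : ℂ} {k : ℕ} {a b : ℝ} (hc : c ∉ S)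
    (h : Nice f S c k a b) : Good f S := fun X hX _ =>
  ⟨nn_nice (fun hx => hc (hX hx)) (h.mono hX) (nice_id X c),
    nn_nice (fun hx => hc (hX hx)) (nice_id X c) (h.mono hX)⟩

lemma good_singleton (f : ℂ → ℂ) (x : ℂ) : Good f {x} := by
  refine good_of_nice (c := x + 1) (k := 0) (a := 1) (b := 1) (by simp) ⟨one_pos, one_pos, ?_⟩
  rintro z rfl w rfl
  simp

lemma good_empty (f : ℂ → ℂ) : Good f ∅ := (good_singleton f 0).mono (by simp)

/-- complete homogeneous sums -/
noncomputable def hh (m : ℕ) (z w : ℂ) : ℂ := ∑ i ∈ Finset.range (m + 1), z ^ i * w ^ (m - i)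

lemma norm_hh_le (m : ℕ) (z w : ℂ) : ‖hh m z w‖ ≤ (m + 1) * max ‖z‖ ‖w‖ ^ m := by
  unfold hh
  refine (norm_sum_le _ _).trans ?_
  refine (Finset.sum_le_card_nsmul _ _ (max ‖z‖ ‖w‖ ^ m) ?_).trans ?_
  · intro i hi
    have hi' : i ≤ m := Nat.lt_succ_iff.1 (Finset.mem_range.1 hi)
    rw [norm_mul, norm_pow, norm_pow]
    calc ‖z‖ ^ i * ‖w‖ ^ (m - i) ≤ max ‖z‖ ‖w‖ ^ i * max ‖z‖ ‖w‖ ^ (m - i) := by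
          gcongr
          · exact le_max_left _ _
          · exact le_max_right _ _
      _ = _ := by rw [← pow_add, Nat.add_sub_cancel' hi']
  · simp

lemma le_norm_hh {k : ℕ} {u z w : ℂ} (hu : ‖u‖ = 1) (hz : z ≠ 0) (hw : w ≠ 0)
    (h : ∀ i ∈ Finset.range (k + 1),
      ‖(z / ‖z‖) ^ i * (w / ‖w‖) ^ (k - i) - u ^ k‖ ≤ 1 / 2) :
    1 / 2 * max ‖z‖ ‖w‖ ^ k ≤ ‖hh k z w‖ := by
  set H : ℝ := ∑ i ∈ Finset.range (k + 1), ‖z‖ ^ i * ‖w‖ ^ (k - i) with hH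
  have hz' : (‖z‖ : ℂ) ≠ 0 := by simpa using hz
  have hw' : (‖w‖ : ℂ) ≠ 0 := by simpa using hw
  have h1 : ‖hh k z w - u ^ k * (H : ℂ)‖ ≤ 1 / 2 * H := by
    have : hh k z w - u ^ k * (H : ℂ) = ∑ i ∈ Finset.range (k + 1),
        ((‖z‖ ^ i * ‖w‖ ^ (k - i) : ℝ) : ℂ) *
          ((z / ‖z‖) ^ i * (w / ‖w‖) ^ (k - i) - u ^ k) := by
      rw [hh, hH]
      push_cast
      rw [Finset.mul_sum, ← Finset.sum_sub_distrib]
      refine Finset.sum_congr rfl fun i _ => ?_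
      rw [div_pow, div_pow]
      field_simp
    rw [this, hH, Finset.mul_sum]
    refine (norm_sum_le _ _).trans (Finset.sum_le_sum fun i hi => ?_)
    rw [norm_mul, Complex.norm_real, Real.norm_of_nonneg (by positivity), mul_comm]
    exact mul_le_mul_of_nonneg_right (h i hi) (by positivity)
  have hH0 : 0 ≤ H := by positivity
  have h2 : ‖u ^ k * (H : ℂ)‖ = H := by
    rw [norm_mul, norm_pow, hu, one_pow, one_mul, Complex.norm_real, Real.norm_of_nonneg hH0]
  have h3 : max ‖z‖ ‖w‖ ^ k ≤ H := by
    rcases max_choice ‖z‖ ‖w‖ with h | h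
    · rw [h, hH]
      have := Finset.single_le_sum (f := fun i => ‖z‖ ^ i * ‖w‖ ^ (k - i))
        (s := Finset.range (k + 1)) (fun i _ => by positivity)
        (Finset.mem_range.2 (Nat.lt_succ_self k))
      simpa using this
    · rw [h, hH]
      have := Finset.single_le_sum (f := fun i => ‖z‖ ^ i * ‖w‖ ^ (k - i))
        (s := Finset.range (k + 1)) (fun i _ => by positivity)
        (Finset.mem_range.2 (Nat.succ_pos k))
      simpa using this
  have h4 := norm_sub_norm_le (u ^ k * (H : ℂ)) (u ^ k * (H : ℂ) - hh k z w)
  rw [sub_sub_cancel, norm_sub_rev _ (hh k z w), h2] at h4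
  linarith

/-- radii at which the `k`-th term dominates -/
def Dom (d : ℕ) (β : ℕ → ℂ) (k : ℕ) : Set ℝ :=
  {t | ∑ m ∈ (Finset.range d).erase k, (m + 1) * ‖β m‖ * t ^ m ≤ 1 / 4 * ‖β k‖ * t ^ k}

lemma good_sector {f : ℂ → ℂ} {c : ℂ} {d k : ℕ} {β : ℕ → ℂ} (hk : k < d) (hβ : β k ≠ 0)
    (hf : ∀ z w, f z - f w = (z - w) * ∑ m ∈ Finset.range d, β m * hh m (z - c) (w - c))
    {u : ℂ} (hu : ‖u‖ = 1) {V : Set ℂ}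
    (hV : ∀ z ∈ V, ∀ w ∈ V, ∀ i ∈ Finset.range (k + 1), ‖z ^ i * w ^ (k - i) - u ^ k‖ ≤ 1 / 2) :
    Good f {z | z ≠ c ∧ ‖z - c‖ ∈ Dom d β k ∧ (z - c) / ‖z - c‖ ∈ V} := by
  have hβ' : 0 < ‖β k‖ := norm_pos_iff.2 hβ
  refine good_of_nice (c := c) (k := k) (a := 1 / 4 * ‖β k‖)
    (b := (k + 1) * ‖β k‖ + 1 / 4 * ‖β k‖) (by simp) ⟨by positivity, by positivity, ?_⟩
  rintro z ⟨hz, hzD, hzV⟩ w ⟨hw, hwD, hwV⟩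
  have hM : max ‖z - c‖ ‖w - c‖ ∈ Dom d β k := by
    rcases max_choice ‖z - c‖ ‖w - c‖ with h | h <;> rw [h] <;> assumption
  have hlow := le_norm_hh hu (sub_ne_zero.2 hz) (sub_ne_zero.2 hw) (hV _ hzV _ hwV)
  have hup := norm_hh_le k (z - c) (w - c)
  have hrest : ‖∑ m ∈ (Finset.range d).erase k, β m * hh m (z - c) (w - c)‖ ≤
      1 / 4 * ‖β k‖ * max ‖z - c‖ ‖w - c‖ ^ k := by
    refine le_trans (norm_sum_le _ _) (le_trans (Finset.sum_le_sum fun m _ => ?_) hM)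
    rw [norm_mul]
    have := norm_hh_le m (z - c) (w - c)
    have h0 := norm_nonneg (β m)
    nlinarith
  rw [dist_eq_norm (f z), hf, norm_mul, ← dist_eq_norm z w,
    ← Finset.add_sum_erase _ _ (Finset.mem_range.2 hk)]
  set R := ∑ m ∈ (Finset.range d).erase k, β m * hh m (z - c) (w - c)
  set t := max ‖z - c‖ ‖w - c‖ ^ k
  have hd := dist_nonneg (x := z) (y := w)
  have e1 := norm_add_le (β k * hh k (z - c) (w - c)) R
  have e2 := norm_sub_le (β k * hh k (z - c) (w - c) + R) R
  rw [add_sub_cancel_right] at e2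
  rw [norm_mul] at e1 e2
  have e3 := mul_le_mul_of_nonneg_left hlow hβ'.le
  have e4 := mul_le_mul_of_nonneg_left hup hβ'.le
  constructor
  · rw [mul_left_comm]
    refine mul_le_mul_of_nonneg_left ?_ hd
    linarith
  · rw [mul_left_comm]
    refine mul_le_mul_of_nonneg_left ?_ hd
    linarith

lemma good_dom {f : ℂ → ℂ} {c : ℂ} {d k : ℕ} {β : ℕ → ℂ} (hk : k < d) (hβ : β k ≠ 0)
    (hf : ∀ z w, f z - f w = (z - w) * ∑ m ∈ Finset.range d, β m * hh m (z - c) (w - c)) :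
    Good f {z | z ≠ c ∧ ‖z - c‖ ∈ Dom d β k} := by
  have hs : Good f {z | z ≠ c ∧ ‖z - c‖ ∈ Dom d β k ∧ (z - c) / ‖z - c‖ ∈ sphere (0 : ℂ) 1} := by
    refine (isCompact_sphere (0 : ℂ) 1).induction_on
      (p := fun V => Good f {z | z ≠ c ∧ ‖z - c‖ ∈ Dom d β k ∧ (z - c) / ‖z - c‖ ∈ V}) ?_ ?_ ?_ ?_
    · simpa using good_empty f
    · intro s t hst h
      exact h.mono fun z hz => ⟨hz.1, hz.2.1, hst hz.2.2⟩
    · intro s t h1 h2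
      refine (h1.union h2).mono ?_
      rintro z ⟨h1, h2, h3 | h3⟩
      · exact Or.inl ⟨h1, h2, h3⟩
      · exact Or.inr ⟨h1, h2, h3⟩
    · intro u hu
      have hu1 : ‖u‖ = 1 := by simpa using hu
      have hev : ∀ᶠ q : ℂ × ℂ in nhds (u, u), ∀ i ∈ Finset.range (k + 1),
          ‖q.1 ^ i * q.2 ^ (k - i) - u ^ k‖ < 1 / 2 := by
        rw [Filter.eventually_all_finset]
        intro i hi
        have hi' : i ≤ k := Nat.lt_succ_iff.1 (Finset.mem_range.1 hi)
        have hcont : Continuous fun q : ℂ × ℂ => ‖q.1 ^ i * q.2 ^ (k - i) - u ^ k‖ := by fun_prop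
        refine hcont.continuousAt.eventually_lt continuousAt_const ?_
        beta_reduce
        rw [← pow_add, Nat.add_sub_cancel' hi']
        simp
      rw [nhds_prod_eq] at hev
      obtain ⟨V, hV, hVp⟩ := (Filter.eventually_prod_self_iff (r := fun z w : ℂ =>
        ∀ i ∈ Finset.range (k + 1), ‖z ^ i * w ^ (k - i) - u ^ k‖ < 1 / 2)).1 hev
      exact ⟨V, mem_nhdsWithin_of_mem_nhds hV,
        good_sector hk hβ hf hu1 fun z hz w hw i hi => (hVp z hz w hw i hi).le⟩
  refine hs.mono ?_
  rintro z ⟨hz, hD⟩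
  refine ⟨hz, hD, ?_⟩
  have : ‖z - c‖ ≠ 0 := norm_ne_zero_iff.2 (sub_ne_zero.2 hz)
  simp [this]

lemma dom_small {d k : ℕ} {β : ℕ → ℂ} (hβ : β k ≠ 0) (hmin : ∀ m < k, β m = 0) :
    ∃ δ > 0, ∀ t, 0 < t → t < δ → t ∈ Dom d β k := by
  have hβ' : 0 < ‖β k‖ := norm_pos_iff.2 hβ
  set A : ℝ := ∑ m ∈ (Finset.range d).erase k, (m + 1) * ‖β m‖ with hA
  have hA0 : 0 ≤ A := by positivity
  refine ⟨min 1 (‖β k‖ / (4 * (A + 1))), by positivity, fun t ht htd => ?_⟩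
  have ht1 : t < 1 := htd.trans_le (min_le_left _ _)
  have ht2 := htd.trans_le (min_le_right _ _)
  rw [lt_div_iff₀ (by positivity)] at ht2
  have : ∑ m ∈ (Finset.range d).erase k, (m + 1) * ‖β m‖ * t ^ m ≤ A * t ^ (k + 1) := by
    rw [hA, Finset.sum_mul]
    refine Finset.sum_le_sum fun m hm => ?_
    rcases lt_or_gt_of_ne (Finset.ne_of_mem_erase hm) with h | h
    · simp [hmin m h]
    · refine mul_le_mul_of_nonneg_left ?_ (by positivity)
      exact pow_le_pow_of_le_one ht.le ht1.le h
  refine this.trans ?_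
  rw [pow_succ]
  have h1 : 0 < t ^ k := by positivity
  have h2 : A * t ≤ 1 / 4 * ‖β k‖ := by nlinarith
  nlinarith

lemma dom_large {d : ℕ} {β : ℕ → ℂ} (hβ : β d ≠ 0) :
    ∃ R : ℝ, 0 < R ∧ ∀ t, R < t → t ∈ Dom (d + 1) β d := by
  have hβ' : 0 < ‖β d‖ := norm_pos_iff.2 hβ
  set A : ℝ := ∑ m ∈ (Finset.range (d + 1)).erase d, (m + 1) * ‖β m‖ with hA
  have hA0 : 0 ≤ A := by positivity
  refine ⟨max 1 (4 * A / ‖β d‖), by positivity, fun t htd => ?_⟩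
  have ht1 : 1 < t := (le_max_left _ _).trans_lt htd
  have ht2 := (le_max_right _ _).trans_lt htd
  rw [div_lt_iff₀ hβ'] at ht2
  have ht0 : 0 < t := by linarith
  have : (∑ m ∈ (Finset.range (d + 1)).erase d, (m + 1) * ‖β m‖ * t ^ m) * t ≤ A * t ^ d := by
    rw [hA, Finset.sum_mul, Finset.sum_mul]
    refine Finset.sum_le_sum fun m hm => ?_
    have h1 := Finset.ne_of_mem_erase hm
    have h2 := Finset.mem_range.1 (Finset.mem_of_mem_erase hm)
    rw [mul_assoc, ← pow_succ]
    refine mul_le_mul_of_nonneg_left ?_ (by positivity)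
    exact pow_le_pow_right₀ ht1.le (by omega)
  have h1 : 0 < t ^ d := by positivity
  show (∑ m ∈ (Finset.range (d + 1)).erase d, (m + 1) * ‖β m‖ * t ^ m) ≤ 1 / 4 * ‖β d‖ * t ^ d
  refine le_of_mul_le_mul_right (this.trans ?_) ht0
  nlinarith

lemma eval_sub_eval (g : Polynomial ℂ) (z w : ℂ) :
    g.eval z - g.eval w =
      (z - w) * ∑ m ∈ Finset.range g.natDegree, g.coeff (m + 1) * hh m z w := by
  rw [Polynomial.eval_eq_sum_range, Polynomial.eval_eq_sum_range, ← Finset.sum_sub_distrib,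
    Finset.sum_range_succ', Finset.mul_sum]
  simp only [pow_zero, sub_self, add_zero]
  refine Finset.sum_congr rfl fun m _ => ?_
  have := geom_sum₂_mul z w (m + 1)
  rw [← mul_sub, ← this, hh]
  simp only [Nat.add_sub_cancel]
  ring

lemma good_univ (p : Polynomial ℂ) (hp : 1 ≤ p.natDegree) :
    Good (fun z => p.eval z) Set.univ := by
  have hloc : ∀ c : ℂ, ∃ δ > 0, Good (fun z => p.eval z) (ball c δ) := by
    intro c
    set g := p.comp (Polynomial.X + Polynomial.C c) with hg
    have hdeg : g.natDegree = p.natDegree := by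
      rw [hg, Polynomial.natDegree_comp, Polynomial.natDegree_X_add_C, mul_one]
    have hgp : ∀ z, p.eval z = g.eval (z - c) := by
      intro z
      simp [hg, Polynomial.eval_comp]
    have hex : ∃ k, g.coeff (k + 1) ≠ 0 := by
      refine ⟨g.natDegree - 1, ?_⟩
      rw [Nat.sub_add_cancel (hdeg ▸ hp)]
      have : g ≠ 0 := by
        intro h0
        rw [h0] at hdeg
        simp at hdeg
        omega
      exact Polynomial.leadingCoeff_ne_zero.2 this
    classical
    have hk := Nat.find_spec hex
    have hmin : ∀ m < Nat.find hex, g.coeff (m + 1) = 0 := by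
      intro m hm
      simpa using Nat.find_min hex hm
    obtain ⟨δ, hδ, hD⟩ := dom_small (d := g.natDegree) (β := fun m => g.coeff (m + 1)) hk hmin
    refine ⟨δ, hδ, ?_⟩
    have hkd : Nat.find hex < g.natDegree := Polynomial.le_natDegree_of_ne_zero hk
    have h1 := good_dom (f := fun z => p.eval z) (c := c) (β := fun m => g.coeff (m + 1)) hkd hk
      (by
        intro z w
        simp only [hgp]
        rw [eval_sub_eval, sub_sub_sub_cancel_right])
    refine (h1.union (good_singleton _ c)).mono ?_
    intro z hz
    by_cases hzc : z = c
    · exact Or.inr hzc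
    · refine Or.inl ⟨hzc, hD _ (norm_pos_iff.2 (sub_ne_zero.2 hzc)) ?_⟩
      rwa [mem_ball, dist_eq_norm] at hz
  obtain ⟨d, hd⟩ : ∃ d, p.natDegree = d + 1 := ⟨p.natDegree - 1, by omega⟩
  have hlead : p.coeff (d + 1) ≠ 0 := by
    rw [← hd]
    have : p ≠ 0 := by
      intro h0
      rw [h0] at hp
      simp at hp
    exact Polynomial.leadingCoeff_ne_zero.2 this
  obtain ⟨R, hR, hD⟩ := dom_large (d := d) (β := fun m => p.coeff (m + 1)) hlead
  have hinf := good_dom (f := fun z => p.eval z) (c := 0) (β := fun m => p.coeff (m + 1))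
    (Nat.lt_succ_self d) hlead
    (by
      intro z w
      simp only [sub_zero]
      rw [eval_sub_eval, hd])
  have hball : Good (fun z => p.eval z) (closedBall 0 R) := by
    refine (isCompact_closedBall (0 : ℂ) R).induction_on (good_empty _)
      (fun s t hst h => h.mono hst) (fun s t h1 h2 => h1.union h2) ?_
    intro x _
    obtain ⟨δ, hδ, h⟩ := hloc x
    exact ⟨ball x δ, mem_nhdsWithin_of_mem_nhds (ball_mem_nhds x hδ), h⟩
  refine (hball.union hinf).mono ?_
  intro z _
  by_cases hz : ‖z‖ ≤ R
  · exact Or.inl (by simpa using hz)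
  · push Not at hz
    refine Or.inr ⟨?_, hD _ (by simpa using hz)⟩
    rintro rfl
    simp at hz
    linarith

end NagProof

/-- A non-constant polynomial preserves the Nagata dimension of
every subset of `ℂ`. -/
theorem polynomial_preserves_nagataDim (p : Polynomial ℂ) (hp : 1 ≤ p.natDegree)
    (X : Set ℂ) :
    nagataDim ((fun z => p.eval z) '' X) = nagataDim X := by
  have key : ∀ n : ℕ, NagProof.Orig n ((fun z => p.eval z) '' X) ↔ NagProof.Orig n X := by
    intro n
    rw [NagProof.orig_iff, NagProof.orig_iff, NagProof.nn_image]
    exact (NagProof.good_univ p hp X (Set.subset_univ X) n).symm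
  unfold nagataDim nagataDimWith
  congr 1
  ext N
  constructor
  · rintro ⟨n, hN, h⟩
    exact ⟨n, hN, (key n).1 h⟩
  · rintro ⟨n, hN, h⟩
    exact ⟨n, hN, (key n).2 h⟩
end

section
/- Let f : ℂ → ℂ be an entire function (holomorphic on all of ℂ). Then f is a non-constant polynomial if and only if dim_N f(X) = dim_N X for every subset X ⊆ ℂ (with the Euclidean metric). -/
open Set Metric

/-- One step of a monochromatic `s`-chain in `X`. -/
def ChainRel {α β : Type*} (d : α → α → ℝ) (X : Set α) (κ : α → β) (s : ℝ) (x y : α) : Prop :=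
  x ∈ X ∧ y ∈ X ∧ κ x = κ y ∧ d x y ≤ s

/-- Coloured version of Nagata dimension at most n. -/
def NC {α : Type*} (n : ℕ) (d : α → α → ℝ) (X : Set α) : Prop :=
  ∃ c : ℝ, 0 < c ∧ ∀ s : ℝ, 0 < s → ∃ κ : α → Fin (n + 1), ∀ x ∈ X, ∀ y,
    Relation.ReflTransGen (ChainRel d X κ s) x y → d x y ≤ c * s

/-- The property in the definition of the Nagata dimension. -/
def NagProp {α : Type*} (n : ℕ) (d : α → α → ℝ) (X : Set α) : Prop :=
  ∃ c : ℝ, 0 < c ∧ ∀ s : ℝ, 0 < s →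
    ∃ B : Set (Set α), (∀ b ∈ B, b ⊆ X) ∧ X ⊆ ⋃₀ B ∧
      (∀ b ∈ B, IsBoundedBy d b (c * s)) ∧
      ∀ T ⊆ X, IsBoundedBy d T s → {b ∈ B | (T ∩ b).Nonempty}.encard ≤ (n : ℕ∞) + 1

theorem rtg_mem {α β : Type*} {d : α → α → ℝ} {X : Set α} {κ : α → β} {s : ℝ} {x y : α}
    (hx : x ∈ X) (h : Relation.ReflTransGen (ChainRel d X κ s) x y) : y ∈ X := by
  induction h with
  | refl => exact hx
  | tail _ h _ => exact h.2.1

theorem rtg_color {α β : Type*} {d : α → α → ℝ} {X : Set α} {κ : α → β} {s : ℝ} {x y : α}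
    (h : Relation.ReflTransGen (ChainRel d X κ s) x y) : κ x = κ y := by
  induction h with
  | refl => rfl
  | tail _ h ih => exact ih.trans h.2.2.1

theorem NC.mono {α : Type*} {n : ℕ} {d : α → α → ℝ} {X Y : Set α} (h : NC n d Y) (hXY : X ⊆ Y) :
    NC n d X := by
  obtain ⟨c, hc, h⟩ := h
  refine ⟨c, hc, fun s hs => ?_⟩
  obtain ⟨κ, hκ⟩ := h s hs
  refine ⟨κ, fun x hx y hxy => hκ x (hXY hx) y ?_⟩
  exact Relation.ReflTransGen.mono (fun a b hab => ⟨hXY hab.1, hXY hab.2.1, hab.2.2⟩) _ _ hxy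

theorem NC.of_subsingleton {α : Type*} [PseudoMetricSpace α] {n : ℕ} {X : Set α}
    (h : X.Subsingleton) : NC n dist X := by
  refine ⟨1, one_pos, fun s hs => ⟨fun _ => 0, fun x hx y hxy => ?_⟩⟩
  rw [h hx (rtg_mem hx hxy), dist_self]
  positivity

theorem nagProp_of_NC {α : Type*} [PseudoMetricSpace α] {n : ℕ} {X : Set α}
    (h : NC n dist X) : NagProp n dist X := by
  obtain ⟨c, hc, h⟩ := h
  refine ⟨c, hc, fun s hs => ?_⟩
  obtain ⟨κ, hκ⟩ := h s hs
  set R := ChainRel dist X κ s with hR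
  have hsymm : ∀ {a b : α}, Relation.ReflTransGen R a b → Relation.ReflTransGen R b a := by
    intro a b hab
    have : Std.Symm R := ⟨fun a b hab => ⟨hab.2.1, hab.1, hab.2.2.1.symm, by
      rw [dist_comm]; exact hab.2.2.2⟩⟩
    exact (Relation.ReflTransGen.stdSymm (r := R)).symm _ _ hab
  refine ⟨{b | ∃ x ∈ X, b = {y | Relation.ReflTransGen R x y}}, ?_, ?_, ?_, ?_⟩
  · rintro b ⟨x, hx, rfl⟩ y hy
    exact rtg_mem hx hy
  · intro x hx
    exact ⟨_, ⟨x, hx, rfl⟩, Relation.ReflTransGen.refl⟩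
  · rintro b ⟨x, hx, rfl⟩ y hy z hz
    exact hκ y (rtg_mem hx hy) z ((hsymm hy).trans hz)
  · intro T hT hTs
    classical
    have key : ∀ b : Set α, ∃ k : Fin (n + 1), (T ∩ b).Nonempty → ∃ t ∈ T ∩ b, κ t = k := by
      intro b
      by_cases hb : (T ∩ b).Nonempty
      · obtain ⟨t, ht⟩ := hb
        exact ⟨κ t, fun _ => ⟨t, ht, rfl⟩⟩
      · exact ⟨0, fun h => absurd h hb⟩
    choose g hg using key
    have := Set.encard_le_encard_of_injOn (f := g)
      (s := {b ∈ {b | ∃ x ∈ X, b = {y | Relation.ReflTransGen R x y}} | (T ∩ b).Nonempty})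
      (t := Set.univ) (fun _ _ => Set.mem_univ _) ?_
    · refine this.trans ?_
      rw [Set.encard_univ]
      simp
    · rintro b ⟨⟨x, hx, rfl⟩, hb⟩ b' ⟨⟨x', hx', rfl⟩, hb'⟩ heq
      obtain ⟨t, ht, htk⟩ := hg _ hb
      obtain ⟨t', ht', htk'⟩ := hg _ hb'
      have h1 : R t t' := ⟨hT ht.1, hT ht'.1, by rw [htk, htk', heq], hTs t ht.1 t' ht'.1⟩
      have h2 : Relation.ReflTransGen R x x' :=
        (Relation.ReflTransGen.tail ht.2 h1).trans (hsymm ht'.2)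
      ext z
      exact ⟨fun hz => (hsymm h2).trans hz, fun hz => h2.trans hz⟩

theorem NC_of_nagProp {α : Type*} [PseudoMetricSpace α] {n : ℕ} {X : Set α}
    (h : NagProp n dist X) : NC n dist X := by
  classical
  obtain ⟨c, hc, h⟩ := h
  refine ⟨(2 + 2 * c) * (n + 2), by positivity, fun s hs => ?_⟩
  set r : ℝ := (n + 2) * s with hr
  have hr0 : 0 < r := by positivity
  obtain ⟨B, hBX, hXB, hBb, hBm⟩ := h (2 * r) (by positivity)
  -- every point has a label
  have key : ∀ x ∈ X, ∃ F : Finset (Set α), F.Nonempty ∧ F.card ≤ n + 1 ∧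
      (∀ b ∈ F, b ∈ B ∧ b.Nonempty ∧ infDist x b < r) ∧
      (∀ b ∈ F, ∀ b' ∈ B, b'.Nonempty → b' ∉ F → infDist x b + s < infDist x b') := by
    intro x hx
    set G : Set (Set α) := {b | b ∈ B ∧ b.Nonempty ∧ infDist x b < r} with hG
    have hGc : G.encard ≤ (n : ℕ∞) + 1 := by
      refine le_trans (Set.encard_le_encard ?_)
        (hBm (X ∩ Metric.ball x r) Set.inter_subset_left ?_)
      · rintro b ⟨hb, hne, hlt⟩
        obtain ⟨y, hy, hxy⟩ := (infDist_lt_iff hne).1 hlt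
        exact ⟨hb, y, ⟨hBX b hb hy, by rw [mem_ball, dist_comm]; exact hxy⟩, hy⟩
      · rintro y ⟨_, hy⟩ z ⟨_, hz⟩
        rw [mem_ball] at hy hz
        linarith [dist_triangle_right y z x]
    have hGf : G.Finite := Set.finite_of_encard_le_coe (k := n + 1) (by exact_mod_cast hGc)
    set F0 := hGf.toFinset with hF0
    have hF0c : F0.card ≤ n + 1 := by
      rw [hGf.encard_eq_coe_toFinset_card] at hGc
      exact_mod_cast hGc
    obtain ⟨b0, hb0, hxb0⟩ := hXB hx
    have hb00 : infDist x b0 = 0 := infDist_zero_of_mem hxb0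
    have hb0F : b0 ∈ F0 := by
      rw [hF0, Set.Finite.mem_toFinset]
      exact ⟨hb0, ⟨x, hxb0⟩, by rw [hb00]; exact hr0⟩
    obtain ⟨j, hj, hj'⟩ := Finset.exists_mem_notMem_of_card_lt_card
      (s := (F0.erase b0).image (fun b => ⌊infDist x b / s⌋₊)) (t := Finset.Icc 1 (n + 1)) (by
        refine lt_of_le_of_lt Finset.card_image_le ?_
        rw [Finset.card_erase_of_mem hb0F, Nat.card_Icc]
        omega)
    rw [Finset.mem_Icc] at hj
    have hjr : (1 : ℝ) ≤ j := by exact_mod_cast hj.1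
    have hjr' : (j : ℝ) ≤ n + 1 := by exact_mod_cast hj.2
    have hgap : ∀ b ∈ B, b.Nonempty → j * s ≤ infDist x b → (j + 1) * s ≤ infDist x b := by
      intro b hb hne hle
      by_contra hlt
      push Not at hlt
      apply hj'
      rw [Finset.mem_image]
      refine ⟨b, Finset.mem_erase.2 ⟨?_, ?_⟩, ?_⟩
      · rintro rfl
        rw [hb00] at hle
        nlinarith
      · rw [hF0, Set.Finite.mem_toFinset]
        refine ⟨hb, hne, lt_of_lt_of_le hlt ?_⟩
        rw [hr]
        exact mul_le_mul_of_nonneg_right (by linarith) hs.le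
      · rw [Nat.floor_eq_iff (div_nonneg infDist_nonneg hs.le), le_div_iff₀ hs, div_lt_iff₀ hs]
        exact ⟨hle, hlt⟩
    refine ⟨F0.filter (fun b => infDist x b < j * s), ⟨b0, ?_⟩, ?_, ?_, ?_⟩
    · rw [Finset.mem_filter, hb00]
      exact ⟨hb0F, by positivity⟩
    · exact (Finset.card_filter_le _ _).trans hF0c
    · intro b hb
      have := (Finset.mem_filter.1 hb).1
      rwa [hF0, Set.Finite.mem_toFinset] at this
    · intro b hb b' hb' hne' hnot
      have h1 := (Finset.mem_filter.1 hb).2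
      have h2 : j * s ≤ infDist x b' := by
        by_contra hlt
        push Not at hlt
        apply hnot
        rw [Finset.mem_filter, hF0, Set.Finite.mem_toFinset]
        refine ⟨⟨hb', hne', lt_of_lt_of_le hlt ?_⟩, hlt⟩
        rw [hr]
        exact mul_le_mul_of_nonneg_right (by linarith) hs.le
      have h3 := hgap b' hb' hne' h2
      linarith
  have key' : ∀ x, ∃ F : Finset (Set α), x ∈ X → (F.Nonempty ∧ F.card ≤ n + 1 ∧
      (∀ b ∈ F, b ∈ B ∧ b.Nonempty ∧ infDist x b < r) ∧
      (∀ b ∈ F, ∀ b' ∈ B, b'.Nonempty → b' ∉ F → infDist x b + s < infDist x b')) := by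
    intro x
    by_cases hx : x ∈ X
    · obtain ⟨F, hF⟩ := key x hx
      exact ⟨F, fun _ => hF⟩
    · exact ⟨∅, fun h => absurd h hx⟩
  choose F hF using key'
  refine ⟨fun x => Fin.ofNat (n + 1) ((F x).card - 1), fun x hx y hxy => ?_⟩
  have hlab : F x = F y := by
    induction hxy with
    | refl => rfl
    | @tail y z _ hyz ih =>
      rw [ih]
      obtain ⟨hy, hz, hcol, hd⟩ := hyz
      obtain ⟨hy1, hy2, hy3, hy4⟩ := hF y hy
      obtain ⟨hz1, hz2, hz3, hz4⟩ := hF z hz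
      have hcard : (F y).card = (F z).card := by
        have := congrArg Fin.val hcol
        simp only [Fin.val_ofNat] at this
        have e1 := hy1.card_pos
        have e2 := hz1.card_pos
        rw [Nat.mod_eq_of_lt (by omega), Nat.mod_eq_of_lt (by omega)] at this
        omega
      by_contra hne
      have hs1 : ¬ F y ⊆ F z := fun hsub => hne (Finset.eq_of_subset_of_card_le hsub hcard.ge)
      have hs2 : ¬ F z ⊆ F y := fun hsub =>
        hne (Finset.eq_of_subset_of_card_le hsub hcard.le).symm
      obtain ⟨b, hb, hb'⟩ := Finset.not_subset.1 hs1
      obtain ⟨e, he, he'⟩ := Finset.not_subset.1 hs2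
      have g1 := hy4 b hb e (hz3 e he).1 (hz3 e he).2.1 he'
      have g2 := hz4 e he b (hy3 b hb).1 (hy3 b hb).2.1 hb'
      have g3 : infDist y e ≤ infDist z e + dist y z := infDist_le_infDist_add_dist
      have g4 : infDist z b ≤ infDist y b + dist z y := infDist_le_infDist_add_dist
      rw [dist_comm z y] at g4
      linarith
  have hy := rtg_mem hx hxy
  obtain ⟨⟨b, hb⟩, -, hx3, -⟩ := hF x hx
  obtain ⟨hbB, hbne, hxb⟩ := hx3 b hb
  obtain ⟨-, -, hyb⟩ := (hF y hy).2.2.1 b (hlab ▸ hb)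
  obtain ⟨u, hu, hxu⟩ := (infDist_lt_iff hbne).1 hxb
  obtain ⟨v, hv, hyv⟩ := (infDist_lt_iff hbne).1 hyb
  have huv := hBb b hbB u hu v hv
  have := dist_triangle4 x u v y
  rw [dist_comm v y] at this
  calc dist x y ≤ r + c * (2 * r) + r := by linarith
    _ = _ := by rw [hr]; ring

theorem NC.union {α : Type*} [PseudoMetricSpace α] {n : ℕ} {A B : Set α}
    (hA : NC n dist A) (hB : NC n dist B) : NC n dist (A ∪ B) := by
  classical
  obtain ⟨c, hc, hA⟩ := hA
  obtain ⟨c', hc', hB⟩ := hB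
  refine ⟨2 * (c + 1) + c' * (c + 2), by positivity, fun s hs => ?_⟩
  obtain ⟨κ, hκ⟩ := hA s hs
  obtain ⟨κ', hκ'⟩ := hB ((c + 2) * s) (by positivity)
  set RA := ChainRel dist A κ s
  set RB := ChainRel dist B κ' ((c + 2) * s)
  refine ⟨fun x => if x ∈ A then κ x else κ' x, fun x hx y hxy => ?_⟩
  have inv : (x ∈ A ∧ Relation.ReflTransGen RA x y) ∨ ∃ b b', b ∈ B ∧ dist x b ≤ (c + 1) * s ∧
      Relation.ReflTransGen RB b b' ∧ ((b' = y ∧ y ∉ A) ∨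
        ∃ a ∈ A, b' ∉ A ∧ (κ' b' = κ a) ∧ dist b' a ≤ s ∧ Relation.ReflTransGen RA a y) := by
    induction hxy with
    | refl =>
      by_cases hxA : x ∈ A
      · exact Or.inl ⟨hxA, .refl⟩
      · refine Or.inr ⟨x, x, hx.resolve_left hxA, ?_, .refl, Or.inl ⟨rfl, hxA⟩⟩
        rw [dist_self]; positivity
    | @tail y z hxy hyz ih =>
      obtain ⟨hy, hz, hcol, hd⟩ := hyz
      by_cases hzA : z ∈ A
      · rcases ih with ⟨hxA, hch⟩ | ⟨b, b', hb, hxb, hbb, h⟩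
        · have hyA := rtg_mem hxA hch
          refine Or.inl ⟨hxA, hch.tail ⟨hyA, hzA, ?_, hd⟩⟩
          simpa [hyA, hzA] using hcol
        · refine Or.inr ⟨b, b', hb, hxb, hbb, Or.inr ?_⟩
          rcases h with ⟨rfl, hyA⟩ | ⟨a, ha, hb'A, hcc, hba, hch⟩
          · exact ⟨z, hzA, hyA, by simpa [hyA, hzA] using hcol, hd, .refl⟩
          · have hyA := rtg_mem ha hch
            refine ⟨a, ha, hb'A, hcc, hba, hch.tail ⟨hyA, hzA, ?_, hd⟩⟩
            simpa [hyA, hzA] using hcol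
      · have hzB := hz.resolve_left hzA
        rcases ih with ⟨hxA, hch⟩ | ⟨b, b', hb, hxb, hbb, h⟩
        · refine Or.inr ⟨z, z, hzB, ?_, .refl, Or.inl ⟨rfl, hzA⟩⟩
          have := hκ x hxA y hch
          linarith [dist_triangle x y z]
        · refine Or.inr ⟨b, z, hb, hxb, hbb.tail ⟨rtg_mem hb hbb, hzB, ?_, ?_⟩, Or.inl ⟨rfl, hzA⟩⟩
          · rcases h with ⟨rfl, hyA⟩ | ⟨a, ha, hb'A, hcc, hba, hch⟩
            · simpa [hyA, hzA] using hcol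
            · have hyA := rtg_mem ha hch
              have e1 : κ y = κ' z := by simpa [hyA, hzA] using hcol
              rw [hcc, rtg_color hch, e1]
          · rcases h with ⟨rfl, hyA⟩ | ⟨a, ha, hb'A, hcc, hba, hch⟩
            · nlinarith
            · have := hκ a ha y hch
              linarith [dist_triangle4 b' a y z]
  rcases inv with ⟨hxA, hch⟩ | ⟨b, b', hb, hxb, hbb, h⟩
  · have := hκ x hxA y hch
    have h2 : 0 ≤ (c + 2 + c' * (c + 2)) * s := by positivity
    nlinarith
  · have h1 := hκ' b hb b' hbb
    have h2 : dist b' y ≤ (c + 1) * s := by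
      rcases h with ⟨rfl, hyA⟩ | ⟨a, ha, hb'A, hcc, hba, hch⟩
      · rw [dist_self]; positivity
      · have := hκ a ha y hch
        linarith [dist_triangle b' a y]
    have := dist_triangle4 x b b' y
    nlinarith

/-- Pulling back the distance by a map. -/
theorem NC_image_iff {α β : Type*} {n : ℕ} (d : β → β → ℝ) (f : α → β) (X : Set α) :
    NC n d (f '' X) ↔ NC n (fun x y => d (f x) (f y)) X := by
  classical
  constructor
  · rintro ⟨c, hc, h⟩
    refine ⟨c, hc, fun s hs => ?_⟩
    obtain ⟨κ, hκ⟩ := h s hs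
    refine ⟨fun x => κ (f x), fun x hx y hxy => hκ (f x) (mem_image_of_mem f hx) (f y) ?_⟩
    exact Relation.ReflTransGen.lift f (fun a b hab =>
      ⟨mem_image_of_mem f hab.1, mem_image_of_mem f hab.2.1, hab.2.2⟩) _ _ hxy
  · rintro ⟨c, hc, h⟩
    refine ⟨c, hc, fun s hs => ?_⟩
    obtain ⟨κ, hκ⟩ := h s hs
    rcases X.eq_empty_or_nonempty with rfl | ⟨x0, hx0⟩
    · exact ⟨fun _ => 0, fun x hx => by simp at hx⟩
    have : ∀ y, ∃ x, y ∈ f '' X → x ∈ X ∧ f x = y := by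
      intro y
      by_cases hy : y ∈ f '' X
      · obtain ⟨x, hx⟩ := hy
        exact ⟨x, fun _ => hx⟩
      · exact ⟨x0, fun h => absurd h hy⟩
    choose g hg using this
    refine ⟨fun y => κ (g y), fun x hx y hxy => ?_⟩
    have hy := rtg_mem hx hxy
    have := hκ (g x) (hg x hx).1 (g y) (Relation.ReflTransGen.lift g (fun a b hab =>
      ⟨(hg a hab.1).1, (hg b hab.2.1).1, hab.2.2.1, by
        simp only [(hg a hab.1).2, (hg b hab.2.1).2]; exact hab.2.2.2⟩) _ _ hxy)
    simpa only [(hg x hx).2, (hg y hy).2] using this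

/-- Annular decomposition: transferring the property between two distances. -/
theorem NC.transfer {α : Type*} {n : ℕ} {d d' : α → α → ℝ} {X : Set α} (k : α → ℤ)
    (A B : ℤ → ℝ) (a b C : ℝ) (ha : 0 < a) (hb : 0 < b) (hC : 0 < C)
    (hA : ∀ i, 0 < A i) (hB : Monotone B) 
    (hs' : ∀ x y, d' x y = d' y x)
    (h1 : ∀ x ∈ X, ∀ y ∈ X, k x = k y → A (k x) * d x y ≤ a * d' x y)
    (h2 : ∀ x ∈ X, ∀ y ∈ X, k x = k y → d' x y ≤ a * (A (k x) * d x y))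
    (h3 : ∀ x ∈ X, ∀ y ∈ X, k x < k y → b * B (k y) ≤ d' x y)
    (h4 : ∀ x ∈ X, ∀ y ∈ X, k x ≤ k y → d' x y ≤ C * B (k y))
    (h : NC n d X) : NC n d' X := by
  classical
  obtain ⟨c, hc, h⟩ := h
  refine ⟨C / b + a * a * c, by positivity, fun s hs => ?_⟩
  have hsc : ∀ i, 0 < a * s / A i := fun i => div_pos (by positivity) (hA i)
  choose κ hκ using fun i => h (a * s / A i) (hsc i)
  refine ⟨fun x => if b * B (k x) ≤ s then 0 else κ (k x) x, fun x hx y hxy => ?_⟩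
  have hy := rtg_mem hx hxy
  by_cases hsm : b * B (k x) ≤ s
  · have hysm : b * B (k y) ≤ s := by
      clear hy
      induction hxy with
      | refl => exact hsm
      | @tail y z _ hyz ih =>
        obtain ⟨hy, hz, -, hd⟩ := hyz
        rcases lt_or_ge (k y) (k z) with hlt | hge
        · exact (h3 y hy z hz hlt).trans hd
        · exact (mul_le_mul_of_nonneg_left (hB hge) hb.le).trans ih
    have hfin : d' x y ≤ C / b * s := by
      rw [div_mul_eq_mul_div, le_div_iff₀ hb]
      rcases le_total (k x) (k y) with hle | hle
      · have := h4 x hx y hy hle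
        nlinarith
      · have := h4 y hy x hx hle
        rw [hs'] at this
        nlinarith
    have : 0 ≤ a * a * c * s := by positivity
    linarith
  · have inv : k y = k x ∧
        Relation.ReflTransGen (ChainRel d X (κ (k x)) (a * s / A (k x))) x y := by
      clear hy
      induction hxy with
      | refl => exact ⟨rfl, .refl⟩
      | @tail y z _ hyz ih =>
        obtain ⟨hy, hz, hcol, hd⟩ := hyz
        obtain ⟨hk, hch⟩ := ih
        have hkz : k z = k x := by
          rcases lt_trichotomy (k y) (k z) with hlt | heq | hgt
          · exfalso
            apply hsm
            have := h3 y hy z hz hlt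
            rw [hk] at hlt
            exact (mul_le_mul_of_nonneg_left (hB hlt.le) hb.le).trans (this.trans hd)
          · rw [← heq, hk]
          · exfalso
            apply hsm
            have := h3 z hz y hy hgt
            rw [hs', hk] at this
            exact this.trans hd
        refine ⟨hkz, hch.tail ⟨hy, hz, ?_, ?_⟩⟩
        · simpa [hk, hkz, hsm] using hcol
        · have := h1 y hy z hz (hk.trans hkz.symm)
          rw [hk] at this
          rw [le_div_iff₀ (hA _)]
          nlinarith
    have e1 := hκ (k x) x hx y inv.2
    have e2 := h2 x hx y hy inv.1.symm
    have e3 : A (k x) * d x y ≤ c * (a * s) := by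
      have := mul_le_mul_of_nonneg_left e1 (hA (k x)).le
      have h5 := (hA (k x)).ne'
      calc _ ≤ _ := this
        _ = _ := by field_simp
    have : 0 ≤ C / b * s := by positivity
    nlinarith

/-- The map `f` preserves the dimension of all subsets of `S`. -/
def Good (f : ℂ → ℂ) (S : Set ℂ) : Prop :=
  ∀ n : ℕ, ∀ X ⊆ S, NC n dist X ↔ NC n dist (f '' X)

theorem Good.mono {f : ℂ → ℂ} {S T : Set ℂ} (h : Good f T) (hST : S ⊆ T) : Good f S :=
  fun n X hX => h n X (hX.trans hST)

theorem Good.union {f : ℂ → ℂ} {S T : Set ℂ} (hS : Good f S) (hT : Good f T) :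
    Good f (S ∪ T) := by
  intro n X hX
  have e : X = (X ∩ S) ∪ (X ∩ T) := by
    rw [← Set.inter_union_distrib_left, Set.inter_eq_left.2 hX]
  have i1 := hS n (X ∩ S) Set.inter_subset_right
  have i2 := hT n (X ∩ T) Set.inter_subset_right
  constructor
  · intro h
    rw [e, Set.image_union]
    exact (i1.1 (h.mono Set.inter_subset_left)).union (i2.1 (h.mono Set.inter_subset_left))
  · intro h
    rw [e]
    exact (i1.2 (h.mono (Set.image_mono Set.inter_subset_left))).union
      (i2.2 (h.mono (Set.image_mono Set.inter_subset_left)))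

theorem Good.of_subsingleton {f : ℂ → ℂ} {S : Set ℂ} (h : S.Subsingleton) : Good f S := by
  intro n X hX
  have hX' := h.anti hX
  exact ⟨fun _ => NC.of_subsingleton (hX'.image f), fun _ => NC.of_subsingleton hX'⟩

theorem good_of_comparable_aux {f : ℂ → ℂ} {S : Set ℂ} (z₀ : ℂ) (e : ℕ) (c₁ c₂ : ℝ)
    (hc₁ : 0 < c₁) (hc₂ : 0 < c₂) (hS : z₀ ∉ S)
    (hpar : ∀ z ∈ S, ∀ w ∈ S, Int.log 2 (dist z z₀) < Int.log 2 (dist w z₀) →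
      Int.log 2 (dist z z₀) + 2 ≤ Int.log 2 (dist w z₀))
    (h1 : ∀ z ∈ S, ∀ w ∈ S,
      c₁ * (dist z w * max (dist z z₀) (dist w z₀) ^ e) ≤ dist (f z) (f w))
    (h2 : ∀ z ∈ S, ∀ w ∈ S,
      dist (f z) (f w) ≤ c₂ * (dist z w * max (dist z z₀) (dist w z₀) ^ e)) : Good f S := by
  intro n X hX
  rw [NC_image_iff]
  set k : ℂ → ℤ := fun z => Int.log 2 (dist z z₀) with hk
  have hpos : ∀ z ∈ X, 0 < dist z z₀ := fun z hz =>
    dist_pos.2 (fun h => hS (h ▸ hX hz))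
  have hlo : ∀ z ∈ X, (2 : ℝ) ^ k z ≤ dist z z₀ := fun z hz => by
    exact_mod_cast Int.zpow_log_le_self (b := 2) one_lt_two (hpos z hz)
  have hhi : ∀ z ∈ X, dist z z₀ ≤ 2 * (2 : ℝ) ^ k z := fun z hz => by
    have := (Int.lt_zpow_succ_log_self (b := 2) one_lt_two (dist z z₀)).le
    rw [zpow_add_one₀ (by norm_num)] at this
    push_cast at this
    linarith
  have hp : ∀ i : ℤ, (0 : ℝ) < 2 ^ i := fun i => by positivity
  have hmono : Monotone (fun i : ℤ => (2 : ℝ) ^ i) := zpow_right_mono₀ (by norm_num)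
  have hsep : ∀ x ∈ X, ∀ y ∈ X, k x < k y → 1 / 2 * (2 : ℝ) ^ k y ≤ dist x y := by
    intro x hx y hy hxy
    have a1 := hpar x (hX hx) y (hX hy) hxy
    have a2 : (2 : ℝ) ^ (k x + 2) ≤ 2 ^ k y := hmono a1
    rw [zpow_add₀ (by norm_num)] at a2
    norm_num at a2
    have a3 := hhi x hx
    have a4 := hlo y hy
    have a5 := dist_triangle y x z₀
    rw [dist_comm y x] at a5
    linarith
  have hdiam : ∀ x ∈ X, ∀ y ∈ X, k x ≤ k y → dist x y ≤ 4 * (2 : ℝ) ^ k y := by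
    intro x hx y hy hxy
    have a2 : (2 : ℝ) ^ (k x) ≤ 2 ^ k y := hmono hxy
    have a3 := hhi x hx
    have a4 := hhi y hy
    have a5 := dist_triangle_right x y z₀
    linarith
  have hMlo : ∀ x ∈ X, ∀ y ∈ X,
      ((2 : ℝ) ^ k y) ^ e ≤ max (dist x z₀) (dist y z₀) ^ e := by
    intro x hx y hy
    exact pow_le_pow_left₀ (hp _).le ((hlo y hy).trans (le_max_right _ _)) e
  have hMhi : ∀ x ∈ X, ∀ y ∈ X, k x ≤ k y →
      max (dist x z₀) (dist y z₀) ^ e ≤ 2 ^ e * ((2 : ℝ) ^ k y) ^ e := by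
    intro x hx y hy hxy
    rw [← mul_pow]
    refine pow_le_pow_left₀ (le_max_of_le_left dist_nonneg) (max_le ?_ (hhi y hy)) e
    have a2 : (2 : ℝ) ^ (k x) ≤ 2 ^ k y := hmono hxy
    linarith [hhi x hx]
  set A : ℤ → ℝ := fun i => ((2 : ℝ) ^ i) ^ e with hA
  have hAp : ∀ i, 0 < A i := fun i => by positivity
  set a : ℝ := 1 / c₁ + c₂ * 2 ^ e with ha
  have ha0 : 0 < a := by positivity
  have q1 : ∀ x ∈ X, ∀ y ∈ X, k x = k y → A (k x) * dist x y ≤ a * dist (f x) (f y) := by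
    intro x hx y hy hxy
    have b1 := h1 x (hX hx) y (hX hy)
    have b2 := hMlo x hx y hy
    rw [← hxy] at b2
    have b3 : c₁ * (dist x y * A (k x)) ≤ dist (f x) (f y) :=
      le_trans (by gcongr) b1
    have b4 : A (k x) * dist x y ≤ 1 / c₁ * dist (f x) (f y) := by
      rw [div_mul_eq_mul_div, le_div_iff₀ hc₁]
      linarith
    have b5 : 0 ≤ c₂ * 2 ^ e * dist (f x) (f y) := by positivity
    rw [ha, add_mul]
    linarith
  have q2 : ∀ x ∈ X, ∀ y ∈ X, k x = k y → dist (f x) (f y) ≤ a * (A (k x) * dist x y) := by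
    intro x hx y hy hxy
    have b1 := h2 x (hX hx) y (hX hy)
    have b2 := hMhi x hx y hy hxy.le
    rw [← hxy] at b2
    have b3 : dist (f x) (f y) ≤ c₂ * (dist x y * (2 ^ e * A (k x))) :=
      le_trans b1 (by gcongr)
    have b5 : 0 ≤ 1 / c₁ * (A (k x) * dist x y) := by
      have := hAp (k x)
      positivity
    rw [ha, add_mul]
    linarith
  constructor
  · intro h
    refine NC.transfer k A (fun i => ((2 : ℝ) ^ i) ^ (e + 1)) a (c₁ / 2) (c₂ * 4 * 2 ^ e) ha0
      (by positivity) (by positivity) hAp ?_ (fun _ _ => dist_comm _ _) q1 q2 ?_ ?_ h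
    · intro i j hij
      exact pow_le_pow_left₀ (hp _).le (hmono hij) _
    · intro x hx y hy hxy
      refine le_trans ?_ (h1 x (hX hx) y (hX hy))
      have b1 := hsep x hx y hy hxy
      have b2 := hMlo x hx y hy
      calc _ = c₁ * ((1 / 2 * (2 : ℝ) ^ k y) * ((2 : ℝ) ^ k y) ^ e) := by ring
        _ ≤ _ := by gcongr
    · intro x hx y hy hxy
      refine le_trans (h2 x (hX hx) y (hX hy)) ?_
      have b1 := hdiam x hx y hy hxy
      have b2 := hMhi x hx y hy hxy
      calc _ ≤ c₂ * ((4 * (2 : ℝ) ^ k y) * (2 ^ e * ((2 : ℝ) ^ k y) ^ e)) := by gcongr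
        _ = _ := by ring
  · intro h
    refine NC.transfer k (fun i => (A i)⁻¹) (fun i => (2 : ℝ) ^ i) a (1 / 2) 4 ha0
      (by positivity) (by positivity) (fun i => inv_pos.2 (hAp i)) hmono
      (fun _ _ => dist_comm _ _) ?_ ?_ hsep hdiam h
    · intro x hx y hy hxy
      have := q2 x hx y hy hxy
      rw [inv_mul_le_iff₀ (hAp _)]
      linarith
    · intro x hx y hy hxy
      have := q1 x hx y hy hxy
      rw [mul_left_comm, le_inv_mul_iff₀ (hAp _)]
      exact this

theorem good_of_comparable {f : ℂ → ℂ} {S : Set ℂ} (z₀ : ℂ) (e : ℕ) (c₁ c₂ : ℝ)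
    (hc₁ : 0 < c₁) (hc₂ : 0 < c₂) (hS : z₀ ∉ S)
    (h1 : ∀ z ∈ S, ∀ w ∈ S,
      c₁ * (dist z w * max (dist z z₀) (dist w z₀) ^ e) ≤ dist (f z) (f w))
    (h2 : ∀ z ∈ S, ∀ w ∈ S,
      dist (f z) (f w) ≤ c₂ * (dist z w * max (dist z z₀) (dist w z₀) ^ e)) : Good f S := by
  have key : ∀ P : ℤ → Prop, (∀ i j, P i → P j → i < j → i + 2 ≤ j) →
      Good f {z ∈ S | P (Int.log 2 (dist z z₀))} := by
    intro P hP
    refine good_of_comparable_aux z₀ e c₁ c₂ hc₁ hc₂ (fun h => hS h.1) ?_ ?_ ?_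
    · exact fun z hz w hw hlt => hP _ _ hz.2 hw.2 hlt
    · exact fun z hz w hw => h1 z hz.1 w hw.1
    · exact fun z hz w hw => h2 z hz.1 w hw.1
  have g1 := key (fun i => i % 2 = 0) (by intro i j; omega)
  have g2 := key (fun i => i % 2 = 1) (by intro i j; omega)
  refine (g1.union g2).mono fun z hz => ?_
  rcases Int.emod_two_eq_zero_or_one (Int.log 2 (dist z z₀)) with h | h
  · exact Or.inl ⟨hz, h⟩
  · exact Or.inr ⟨hz, h⟩

/-- The complete homogeneous polynomial of degree `m - 1` in two variables. -/
noncomputable def hsum (m : ℕ) (u v : ℂ) : ℂ := ∑ i ∈ Finset.range m, u ^ i * v ^ (m - 1 - i)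

theorem hsum_mul (m : ℕ) (u v : ℂ) : u ^ m - v ^ m = (u - v) * hsum m u v := by
  rw [mul_comm, hsum]
  exact ((Commute.all u v).geom_sum₂_mul m).symm

theorem norm_hsum_le (m : ℕ) (u v : ℂ) : ‖hsum m u v‖ ≤ m * max ‖u‖ ‖v‖ ^ (m - 1) := by
  have h0 : 0 ≤ max ‖u‖ ‖v‖ := le_max_of_le_left (norm_nonneg _)
  calc ‖hsum m u v‖ ≤ ∑ i ∈ Finset.range m, ‖u ^ i * v ^ (m - 1 - i)‖ := norm_sum_le _ _
    _ ≤ ∑ i ∈ Finset.range m, max ‖u‖ ‖v‖ ^ (m - 1) := by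
      refine Finset.sum_le_sum fun i hi => ?_
      have hi' := Finset.mem_range.1 hi
      rw [norm_mul, norm_pow, norm_pow]
      calc _ ≤ max ‖u‖ ‖v‖ ^ i * max ‖u‖ ‖v‖ ^ (m - 1 - i) := by
            gcongr
            · exact le_max_left _ _
            · exact le_max_right _ _
        _ = _ := by rw [← pow_add]; congr 1; omega
    _ = _ := by simp

theorem exists_cone (m : ℕ) (hm : 1 ≤ m) (θ : ℂ) (hθ : ‖θ‖ = 1) :
    ∃ V ∈ nhds θ, ∀ u v : ℂ, u / ‖u‖ ∈ V → v / ‖v‖ ∈ V →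
      1 / 2 * max ‖u‖ ‖v‖ ^ (m - 1) ≤ ‖hsum m u v‖ := by
  have hθ0 : θ ≠ 0 := by
    rintro rfl
    simp at hθ
  have ev : ∀ᶠ q : ℂ × ℂ in nhds (θ, θ), ∀ i ∈ Finset.range m,
      1 / 2 < ((θ⁻¹) ^ (m - 1) * (q.1 ^ i * q.2 ^ (m - 1 - i))).re := by
    rw [Filter.eventually_all_finset]
    intro i hi
    have hi' := Finset.mem_range.1 hi
    have hcont : Continuous (fun q : ℂ × ℂ =>
      ((θ⁻¹) ^ (m - 1) * (q.1 ^ i * q.2 ^ (m - 1 - i))).re) := by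
      fun_prop
    apply (hcont.tendsto (θ, θ)).eventually_const_lt
    simp only
    rw [← pow_add, show i + (m - 1 - i) = m - 1 by omega, ← mul_pow, inv_mul_cancel₀ hθ0]
    norm_num
  obtain ⟨V₁, hV₁, V₂, hV₂, hV⟩ := mem_nhds_prod_iff.1 ev
  refine ⟨V₁ ∩ V₂, Filter.inter_mem hV₁ hV₂, fun u v hu hv => ?_⟩
  have hq := hV (Set.mk_mem_prod hu.1 hv.2)
  simp only [Set.mem_ofPred_eq] at hq
  have e1 : ∀ w : ℂ, w = ‖w‖ * (w / ‖w‖) := by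
    intro w
    rcases eq_or_ne w 0 with rfl | hw
    · simp
    · have : (‖w‖ : ℂ) ≠ 0 := by exact_mod_cast norm_ne_zero_iff.2 hw
      field_simp
  have e2 : ((θ⁻¹) ^ (m - 1) * hsum m u v).re = ∑ i ∈ Finset.range m,
      ‖u‖ ^ i * ‖v‖ ^ (m - 1 - i) *
        ((θ⁻¹) ^ (m - 1) * ((u / ‖u‖) ^ i * (v / ‖v‖) ^ (m - 1 - i))).re := by
    rw [hsum, Finset.mul_sum, Complex.re_sum]
    refine Finset.sum_congr rfl fun i _ => ?_
    rw [← Complex.re_ofReal_mul]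
    congr 1
    conv_lhs => rw [e1 u, e1 v]
    push_cast
    ring
  have e3 : ((θ⁻¹) ^ (m - 1) * hsum m u v).re ≤ ‖hsum m u v‖ := by
    refine (Complex.re_le_norm _).trans ?_
    rw [norm_mul, norm_pow, norm_inv, hθ]
    simp
  have e4 : ∀ i ∈ Finset.range m, 1 / 2 * (‖u‖ ^ i * ‖v‖ ^ (m - 1 - i)) ≤
      ((θ⁻¹) ^ (m - 1) * hsum m u v).re := by
    intro j hj
    rw [e2]
    refine le_trans ?_ (Finset.single_le_sum (f := fun i => ‖u‖ ^ i * ‖v‖ ^ (m - 1 - i) *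
        ((θ⁻¹) ^ (m - 1) * ((u / ‖u‖) ^ i * (v / ‖v‖) ^ (m - 1 - i))).re) ?_ hj)
    · have := (hq j hj).le
      rw [mul_comm]
      gcongr
    · intro i hi
      have := (hq i hi).le
      have h0 : (0 : ℝ) ≤ 1 / 2 := by norm_num
      have := h0.trans this
      positivity
  refine le_trans ?_ e3
  rcases le_total ‖u‖ ‖v‖ with h | h
  · rw [max_eq_right h]
    simpa using e4 0 (Finset.mem_range.2 (by omega))
  · rw [max_eq_left h]
    simpa using e4 (m - 1) (Finset.mem_range.2 (by omega))

open Polynomial in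
theorem eval_sub_eq (q : ℂ[X]) (u v : ℂ) :
    q.eval u - q.eval v =
      (u - v) * ∑ k ∈ Finset.range (q.natDegree + 1), q.coeff k * hsum k u v := by
  rw [eval_eq_sum_range, eval_eq_sum_range, ← Finset.sum_sub_distrib, Finset.mul_sum]
  refine Finset.sum_congr rfl fun k _ => ?_
  rw [← mul_sub, hsum_mul]
  ring

open Polynomial in
theorem good_region (p : ℂ[X]) (z₀ : ℂ) (m : ℕ) (hm : 1 ≤ m) (hmc : (taylor z₀ p).coeff m ≠ 0)
    (T : Set ℝ) (δ : ℝ) (hδ : 0 ≤ δ)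
    (hδK : δ * (∑ k ∈ Finset.range ((taylor z₀ p).natDegree + 1), ‖(taylor z₀ p).coeff k‖ * k) ≤
      ‖(taylor z₀ p).coeff m‖ / 4)
    (hT0 : ∀ M ∈ T, 0 < M)
    (hT : ∀ M ∈ T, ∀ k, 1 ≤ k → k ≠ m → (taylor z₀ p).coeff k ≠ 0 →
      M ^ (k - 1) ≤ δ * M ^ (m - 1)) :
    Good (fun z => p.eval z) {z | ‖z - z₀‖ ∈ T} := by
  set q := taylor z₀ p with hq
  have hsph : Good (fun z => p.eval z)
      {z | ‖z - z₀‖ ∈ T ∧ (z - z₀) / ‖z - z₀‖ ∈ Metric.sphere (0 : ℂ) 1} := by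
    refine IsCompact.induction_on (isCompact_sphere (0 : ℂ) 1)
      (p := fun V => Good (fun z => p.eval z) {z | ‖z - z₀‖ ∈ T ∧ (z - z₀) / ‖z - z₀‖ ∈ V})
      ?_ ?_ ?_ ?_
    · exact Good.of_subsingleton (by simp)
    · exact fun s t hst h => h.mono fun z hz => ⟨hz.1, hst hz.2⟩
    · intro s t hs ht
      refine (hs.union ht).mono fun z hz => ?_
      rcases hz.2 with h | h
      · exact Or.inl ⟨hz.1, h⟩
      · exact Or.inr ⟨hz.1, h⟩
    · intro θ hθ
      obtain ⟨V, hV, hcone⟩ := exists_cone m hm θ (by simpa using hθ)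
      refine ⟨V, mem_nhdsWithin_of_mem_nhds hV, ?_⟩
      have hb0 : 0 < ‖q.coeff m‖ := norm_pos_iff.2 hmc
      have main : ∀ z ∈ {z | ‖z - z₀‖ ∈ T ∧ (z - z₀) / ‖z - z₀‖ ∈ V},
          ∀ w ∈ {z | ‖z - z₀‖ ∈ T ∧ (z - z₀) / ‖z - z₀‖ ∈ V},
          ‖q.coeff m‖ / 4 * (dist z w * max (dist z z₀) (dist w z₀) ^ (m - 1)) ≤
            dist (p.eval z) (p.eval w) ∧
          dist (p.eval z) (p.eval w) ≤ (‖q.coeff m‖ * m + ‖q.coeff m‖ / 4) *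
            (dist z w * max (dist z z₀) (dist w z₀) ^ (m - 1)) := by
        rintro z ⟨hzT, hzV⟩ w ⟨hwT, hwV⟩
        have hMT : max (dist z z₀) (dist w z₀) ∈ T := by
          rw [dist_eq_norm, dist_eq_norm]
          rcases max_choice ‖z - z₀‖ ‖w - z₀‖ with h | h <;> rw [h] <;> assumption
        have hlow := hcone (z - z₀) (w - z₀) hzV hwV
        have hup := norm_hsum_le m (z - z₀) (w - z₀)
        have hupk := fun k => norm_hsum_le k (z - z₀) (w - z₀)
        rw [← dist_eq_norm z z₀, ← dist_eq_norm w z₀] at hlow hup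
        simp only [← dist_eq_norm] at hupk
        set M := max (dist z z₀) (dist w z₀) with hM
        have hM0 := hT0 M hMT
        have heq : dist (p.eval z) (p.eval w) = dist z w *
            ‖∑ k ∈ Finset.range (q.natDegree + 1), q.coeff k * hsum k (z - z₀) (w - z₀)‖ := by
          have := eval_sub_eq q (z - z₀) (w - z₀)
          rw [hq, taylor_eval_sub, taylor_eval_sub, ← hq] at this
          rw [dist_eq_norm, this, norm_mul, dist_eq_norm]
          congr 2
          ring
        have hmr : m ∈ Finset.range (q.natDegree + 1) :=
          Finset.mem_range.2 (Nat.lt_succ_of_le (le_natDegree_of_ne_zero hmc))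
        rw [← Finset.add_sum_erase _ _ hmr] at heq
        set E := ∑ k ∈ (Finset.range (q.natDegree + 1)).erase m,
          q.coeff k * hsum k (z - z₀) (w - z₀) with hE
        have hEb : ‖E‖ ≤ ‖q.coeff m‖ / 4 * M ^ (m - 1) := by
          calc ‖E‖ ≤ ∑ k ∈ (Finset.range (q.natDegree + 1)).erase m,
                ‖q.coeff k‖ * k * (δ * M ^ (m - 1)) := by
                refine norm_sum_le_of_le _ fun k hk => ?_
                have hkm := Finset.ne_of_mem_erase hk
                rw [norm_mul, mul_assoc]
                by_cases hk0 : q.coeff k = 0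
                · simp [hk0]
                · refine mul_le_mul_of_nonneg_left ?_ (norm_nonneg _)
                  rcases Nat.eq_zero_or_pos k with rfl | hkpos
                  · simp [hsum]
                  · exact (hupk k).trans (mul_le_mul_of_nonneg_left
                      (hT M hMT k hkpos hkm hk0) (Nat.cast_nonneg _))
            _ ≤ ∑ k ∈ (Finset.range (q.natDegree + 1)),
                ‖q.coeff k‖ * k * (δ * M ^ (m - 1)) := by
                refine Finset.sum_le_sum_of_subset_of_nonneg (Finset.erase_subset _ _) ?_
                intros
                positivity
            _ = (δ * ∑ k ∈ (Finset.range (q.natDegree + 1)), ‖q.coeff k‖ * k) * M ^ (m - 1) := by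
                rw [← Finset.sum_mul]
                ring
            _ ≤ _ := by gcongr
        have hd : 0 ≤ dist z w := dist_nonneg
        rw [heq]
        constructor
        · have l1 : ‖q.coeff m‖ / 4 * M ^ (m - 1) ≤
              ‖q.coeff m * hsum m (z - z₀) (w - z₀) + E‖ := by
            have := norm_sub_le (q.coeff m * hsum m (z - z₀) (w - z₀) + E) E
            rw [add_sub_cancel_right, norm_mul] at this
            nlinarith
          calc _ = dist z w * (‖q.coeff m‖ / 4 * M ^ (m - 1)) := by ring
            _ ≤ _ := by gcongr
        · have l1 : ‖q.coeff m * hsum m (z - z₀) (w - z₀) + E‖ ≤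
              (‖q.coeff m‖ * m + ‖q.coeff m‖ / 4) * M ^ (m - 1) := by
            have := norm_add_le (q.coeff m * hsum m (z - z₀) (w - z₀)) E
            rw [norm_mul] at this
            nlinarith
          calc _ ≤ dist z w * ((‖q.coeff m‖ * m + ‖q.coeff m‖ / 4) * M ^ (m - 1)) := by gcongr
            _ = _ := by ring
      refine good_of_comparable z₀ (m - 1) (‖q.coeff m‖ / 4) (‖q.coeff m‖ * m + ‖q.coeff m‖ / 4)
        (by positivity) (by positivity) ?_ (fun z hz w hw => (main z hz w hw).1)
        (fun z hz w hw => (main z hz w hw).2)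
      intro h
      have := hT0 _ h.1
      simp at this
  refine hsph.mono fun z hz => ⟨hz, ?_⟩
  have := hT0 _ hz
  rw [mem_sphere_zero_iff_norm, norm_div, Complex.norm_real, norm_norm, div_self this.ne']

open Polynomial in
theorem good_nhds (p : ℂ[X]) (hp : 1 ≤ p.natDegree) (z₀ : ℂ) :
    ∃ t ∈ nhds z₀, Good (fun z => p.eval z) t := by
  classical
  set q := taylor z₀ p with hq
  have hqd : q.natDegree = p.natDegree := natDegree_taylor p z₀
  have hex : ∃ k, 1 ≤ k ∧ q.coeff k ≠ 0 := by
    refine ⟨q.natDegree, by omega, ?_⟩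
    rw [coeff_natDegree, Ne, leadingCoeff_eq_zero]
    intro h
    rw [h] at hqd
    simp at hqd
    omega
  set m := Nat.find hex with hm
  obtain ⟨hm1, hmc⟩ := Nat.find_spec hex
  set K := ∑ k ∈ Finset.range (q.natDegree + 1), ‖q.coeff k‖ * k with hK
  have hK0 : 0 ≤ K := Finset.sum_nonneg fun _ _ => by positivity
  have hb0 : 0 < ‖q.coeff m‖ := norm_pos_iff.2 hmc
  set δ := ‖q.coeff m‖ / (4 * (K + 1)) with hδ
  have hδ0 : 0 < δ := by positivity
  have g := good_region p z₀ m hm1 hmc {M | 0 < M ∧ M < min 1 δ} δ hδ0.le ?_ (fun M h => h.1) ?_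
  · refine ⟨Metric.ball z₀ (min 1 δ), Metric.ball_mem_nhds _ (by positivity), ?_⟩
    refine (g.union (Good.of_subsingleton (Set.subsingleton_singleton (a := z₀)))).mono ?_
    intro z hz
    rw [mem_ball, dist_eq_norm] at hz
    by_cases h : z = z₀
    · exact Or.inr h
    · exact Or.inl ⟨norm_pos_iff.2 (sub_ne_zero.2 h), hz⟩
  · rw [← hq, ← hK, hδ, div_mul_eq_mul_div, div_le_div_iff₀ (by positivity) (by positivity)]
    nlinarith
  · rintro M ⟨hM0, hM⟩ k hk hkm hkc
    have hmk : m < k := lt_of_le_of_ne (Nat.find_min' hex ⟨hk, hkc⟩) (Ne.symm hkm)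
    have hM1 : M ≤ 1 := hM.le.trans (min_le_left _ _)
    have hMδ : M ≤ δ := hM.le.trans (min_le_right _ _)
    calc M ^ (k - 1) ≤ M ^ (m - 1 + 1) := pow_le_pow_of_le_one hM0.le hM1 (by omega)
      _ = M * M ^ (m - 1) := by ring
      _ ≤ _ := by gcongr

open Polynomial in
theorem good_infty (p : ℂ[X]) (hp : 1 ≤ p.natDegree) :
    ∃ R : ℝ, Good (fun z => p.eval z) {z | R < ‖z‖} := by
  set q := taylor 0 p with hq
  have hqd : q.natDegree = p.natDegree := natDegree_taylor p 0
  set m := q.natDegree with hm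
  have hm1 : 1 ≤ m := by omega
  have hmc : q.coeff m ≠ 0 := by
    rw [hm, coeff_natDegree, Ne, leadingCoeff_eq_zero]
    intro h
    rw [h] at hm
    simp at hm
    omega
  set K := ∑ k ∈ Finset.range (q.natDegree + 1), ‖q.coeff k‖ * k with hK
  have hK0 : 0 ≤ K := Finset.sum_nonneg fun _ _ => by positivity
  have hb0 : 0 < ‖q.coeff m‖ := norm_pos_iff.2 hmc
  set δ := ‖q.coeff m‖ / (4 * (K + 1)) with hδ
  have hδ0 : 0 < δ := by positivity
  have g := good_region p 0 m hm1 hmc {M | max 1 (1 / δ) < M} δ hδ0.le ?_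
    (fun M h => lt_of_lt_of_le one_pos ((le_max_left _ _).trans (le_of_lt h))) ?_
  · refine ⟨max 1 (1 / δ), ?_⟩
    simpa only [sub_zero, Set.mem_ofPred_eq] using g
  · rw [← hq, ← hK, hδ, div_mul_eq_mul_div, div_le_div_iff₀ (by positivity) (by positivity)]
    nlinarith
  · intro M hM k hk hkm hkc
    have hM1 : 1 ≤ M := (le_max_left _ _).trans (le_of_lt hM)
    have hMδ : 1 / δ ≤ M := (le_max_right _ _).trans (le_of_lt hM)
    have hkm' : k < m := lt_of_le_of_ne (le_natDegree_of_ne_zero hkc) hkm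
    have h1 : 1 ≤ δ * M := by
      rw [div_le_iff₀ hδ0] at hMδ
      linarith
    have h0 : 0 ≤ M ^ (k - 1) := by positivity
    calc M ^ (k - 1) ≤ (δ * M) * M ^ (k - 1) := by nlinarith
      _ = δ * M ^ (k - 1 + 1) := by ring
      _ ≤ _ := by
        gcongr
        omega

open Polynomial in
theorem good_univ (p : ℂ[X]) (hp : 1 ≤ p.natDegree) :
    Good (fun z => p.eval z) Set.univ := by
  obtain ⟨R, hR⟩ := good_infty p hp
  have hball : Good (fun z => p.eval z) (Metric.closedBall 0 R) := by
    refine IsCompact.induction_on (isCompact_closedBall (0 : ℂ) R) ?_ ?_ ?_ ?_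
    · exact Good.of_subsingleton Set.subsingleton_empty
    · exact fun s t hst h => h.mono hst
    · exact fun s t hs ht => hs.union ht
    · intro x _
      obtain ⟨t, ht, h⟩ := good_nhds p hp x
      exact ⟨t, mem_nhdsWithin_of_mem_nhds ht, h⟩
  refine (hball.union hR).mono fun z _ => ?_
  rcases le_or_gt ‖z‖ R with h | h
  · exact Or.inl (by simpa using h)
  · exact Or.inr h

theorem nagProp_iff_NC {α : Type*} [PseudoMetricSpace α] {n : ℕ} {X : Set α} :
    NagProp n dist X ↔ NC n dist X := ⟨NC_of_nagProp, nagProp_of_NC⟩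

theorem nagataDim_eq {α : Type*} [PseudoMetricSpace α] (X : Set α) :
    nagataDim X = sInf {N : ℕ∞ | ∃ n : ℕ, N = (n : ℕ∞) ∧ NC n dist X} := by
  simp only [← nagProp_iff_NC]
  rfl

theorem nagataDim_eq_zero_iff {α : Type*} [PseudoMetricSpace α] (X : Set α) :
    nagataDim X = 0 ↔ NC 0 dist X := by
  rw [nagataDim_eq]
  constructor
  · intro h
    have h1 : sInf {N : ℕ∞ | ∃ n : ℕ, N = (n : ℕ∞) ∧ NC n dist X} < 1 := by
      rw [h]
      exact zero_lt_one
    obtain ⟨N, ⟨n, rfl, hn⟩, hlt⟩ := sInf_lt_iff.1 h1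
    have : n = 0 := by
      have : n < 1 := by exact_mod_cast hlt
      omega
    rwa [this] at hn
  · intro h
    exact le_antisymm (sInf_le ⟨0, by simp, h⟩) bot_le

/-- A set whose closure contains the unit interval does not have Nagata dimension zero. -/
theorem not_NC_zero {Y : Set ℂ} (hY : ∀ t : ℝ, ∀ ε > 0, 0 ≤ t → t ≤ 1 → ∃ y ∈ Y, dist y (t : ℂ) < ε) :
    ¬ NC 0 dist Y := by
  rintro ⟨c, hc, h⟩
  set s : ℝ := 1 / (c + 1) with hs
  have hs0 : 0 < s := by positivity
  obtain ⟨κ, hκ⟩ := h s hs0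
  obtain ⟨N, hN⟩ := exists_nat_gt (2 / s)
  have hN0 : (0 : ℝ) < N := lt_trans (by positivity) hN
  have key : ∀ j : ℕ, ∃ y, j ≤ N → y ∈ Y ∧ dist y (((j / N : ℝ)) : ℂ) < s / 4 := by
    intro j
    by_cases hj : j ≤ N
    · obtain ⟨y, hy, hd⟩ := hY (j / N) (s / 4) (by positivity) (by positivity)
        (by rw [div_le_one hN0]; exact_mod_cast hj)
      exact ⟨y, fun _ => ⟨hy, hd⟩⟩
    · exact ⟨0, fun h => absurd h hj⟩
  choose y hy using key
  have hch : ∀ j, j ≤ N → Relation.ReflTransGen (ChainRel dist Y κ s) (y 0) (y j) := by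
    intro j
    induction j with
    | zero => exact fun _ => .refl
    | succ j ih =>
      intro hj
      obtain ⟨m1, d1⟩ := hy j (by omega)
      obtain ⟨m2, d2⟩ := hy (j + 1) hj
      refine (ih (by omega)).tail ⟨m1, m2, Subsingleton.elim (α := Fin 1) _ _, ?_⟩
      have d3 : dist (((j / N : ℝ)) : ℂ) ((((j + 1 : ℕ) / N : ℝ)) : ℂ) < s / 2 := by
        rw [Complex.dist_eq, ← Complex.ofReal_sub, Complex.norm_real, Real.norm_eq_abs]
        have : (j / N : ℝ) - ((j + 1 : ℕ) / N : ℝ) = -(1 / N) := by push_cast; ring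
        rw [this, abs_neg, abs_of_pos (by positivity), div_lt_iff₀ hN0]
        rw [div_lt_iff₀ hs0] at hN
        linarith
      have := dist_triangle4 (y j) (((j / N : ℝ)) : ℂ) ((((j + 1 : ℕ) / N : ℝ)) : ℂ) (y (j + 1))
      rw [dist_comm ((((j + 1 : ℕ) / N : ℝ)) : ℂ) (y (j + 1))] at this
      linarith
  obtain ⟨m1, d1⟩ := hy 0 (Nat.zero_le _)
  obtain ⟨m2, d2⟩ := hy N le_rfl
  have hfin := hκ (y 0) m1 (y N) (hch N le_rfl)
  rw [div_self hN0.ne'] at d2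
  have e1 := dist_triangle4 (0 : ℂ) (y 0) (y N) 1
  rw [dist_comm 0 (y 0)] at e1
  simp at d1 d2 e1
  have e2 : c * s + s = 1 := by
    rw [hs]; field_simp
  linarith

/-- A rapidly growing sequence has Nagata dimension zero. -/
theorem NC_zero_of_growth (z : ℕ → ℂ) (hz : ∀ m n, m < n → 2 * ‖z m‖ ≤ ‖z n‖) :
    NC 0 dist (Set.range z) := by
  refine ⟨4, by norm_num, fun s hs => ⟨fun _ => 0, fun x _ y hxy => ?_⟩⟩
  have hstep : ∀ m n, m < n → dist (z m) (z n) ≤ s → ‖z m‖ ≤ 2 * s ∧ ‖z n‖ ≤ 2 * s := by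
    intro m n hmn hd
    have h1 := hz m n hmn
    have h2 := norm_sub_norm_le (z n) (z m)
    rw [← dist_eq_norm, dist_comm] at h2
    have := norm_nonneg (z m)
    constructor <;> linarith
  have inv : x = y ∨ (‖x‖ ≤ 2 * s ∧ ‖y‖ ≤ 2 * s) := by
    induction hxy with
    | refl => exact Or.inl rfl
    | tail _ hyz ih =>
      obtain ⟨⟨m, rfl⟩, ⟨n, rfl⟩, -, hd⟩ := hyz
      have : z m = z n ∨ (‖z m‖ ≤ 2 * s ∧ ‖z n‖ ≤ 2 * s) := by
        rcases lt_trichotomy m n with hlt | rfl | hgt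
        · exact Or.inr (hstep m n hlt hd)
        · exact Or.inl rfl
        · rw [dist_comm] at hd
          exact Or.inr (hstep n m hgt hd).symm
      rcases this with he | he
      · rwa [← he]
      · rcases ih with rfl | hi
        · exact Or.inr he
        · exact Or.inr ⟨hi.1, he.2⟩
  rcases inv with rfl | ⟨h1, h2⟩
  · rw [dist_self]; positivity
  · have := norm_sub_le x y
    rw [← dist_eq_norm] at this
    linarith

/-- An entire function of polynomial growth is a polynomial. -/
theorem polynomial_of_growth (n : ℕ) : ∀ (f : ℂ → ℂ), Differentiable ℂ f →
    ∀ R C : ℝ, (∀ z, R ≤ ‖z‖ → ‖f z‖ ≤ C * ‖z‖ ^ n) →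
    ∃ p : Polynomial ℂ, ∀ z, f z = p.eval z := by
  induction n with
  | zero =>
    intro f hf R C h
    have hb : Bornology.IsBounded (Set.range f) := by
      have h1 := ((isCompact_closedBall (0 : ℂ) R).image hf.continuous).isBounded
      refine (h1.union (Metric.isBounded_closedBall (x := (0 : ℂ)) (r := C))).subset ?_
      rintro _ ⟨z, rfl⟩
      rcases le_total ‖z‖ R with hz | hz
      · exact Or.inl ⟨z, by simpa using hz, rfl⟩
      · exact Or.inr (by simpa using h z hz)
    exact ⟨Polynomial.C (f 0), fun z => by
      rw [Polynomial.eval_C]; exact hf.apply_eq_apply_of_bounded hb z 0⟩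
  | succ n ih =>
    intro f hf R C h
    have hg : Differentiable ℂ (dslope f 0) := by
      rw [← differentiableOn_univ] at hf ⊢
      exact (Complex.differentiableOn_dslope Filter.univ_mem).2 hf
    have hfg : ∀ z, f z = f 0 + z * dslope f 0 z := by
      intro z
      have := sub_smul_dslope f 0 z
      rw [sub_zero, smul_eq_mul] at this
      rw [this]; ring
    obtain ⟨p, hp⟩ := ih (dslope f 0) hg (max R 1) (C + ‖f 0‖) (by
      intro z hz
      have hz1 : 1 ≤ ‖z‖ := (le_max_right _ _).trans hz
      have hzR : R ≤ ‖z‖ := (le_max_left _ _).trans hz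
      have h0 : 0 < ‖z‖ := by linarith
      have e1 : ‖z‖ * ‖dslope f 0 z‖ ≤ ‖f z‖ + ‖f 0‖ := by
        rw [← norm_mul, show z * dslope f 0 z = f z - f 0 by rw [hfg z]; ring]
        exact norm_sub_le _ _
      have e2 := h z hzR
      have e3 : 1 ≤ ‖z‖ ^ (n + 1) := one_le_pow₀ hz1
      have e4 := norm_nonneg (f 0)
      refine le_of_mul_le_mul_left ?_ h0
      calc _ ≤ _ := e1
        _ ≤ C * ‖z‖ ^ (n + 1) + ‖f 0‖ * ‖z‖ ^ (n + 1) := by nlinarith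
        _ = _ := by ring)
    exact ⟨Polynomial.C (f 0) + Polynomial.X * p, fun z => by
      rw [hfg z, hp z]; simp⟩

/-- Casorati–Weierstrass for entire functions. -/
theorem polynomial_of_not_dense (f : ℂ → ℂ) (hf : Differentiable ℂ f) (R : ℝ) (w : ℂ) (ε : ℝ)
    (hε : 0 < ε) (h : ∀ z, R ≤ ‖z‖ → ε ≤ ‖f z - w‖) :
    ∃ p : Polynomial ℂ, ∀ z, f z = p.eval z := by
  set g : ℂ → ℂ := fun u => (f u⁻¹ - w)⁻¹ with hg
  set ρ : ℝ := (max R 1)⁻¹ with hρ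
  have hρ0 : 0 < ρ := by positivity
  have hR : ∀ u ∈ Metric.ball (0 : ℂ) ρ \ {0}, ε ≤ ‖f u⁻¹ - w‖ := by
    rintro u ⟨hu, hu0⟩
    rw [mem_ball_zero_iff] at hu
    apply h
    rw [norm_inv]
    have hpos : 0 < ‖u‖ := norm_pos_iff.2 hu0
    refine (le_max_left R 1).trans ?_
    rw [le_inv_comm₀ (by positivity) hpos]
    exact hu.le
  have hdiff : DifferentiableOn ℂ g (Metric.ball (0 : ℂ) ρ \ {0}) := by
    intro u hu
    have h1 := hR u hu
    have hne : f u⁻¹ - w ≠ 0 := norm_pos_iff.1 (hε.trans_le h1)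
    have hd : DifferentiableAt ℂ (fun u : ℂ => f u⁻¹ - w) u :=
      ((hf _).comp u (differentiableAt_inv hu.2)).sub_const w
    exact (hd.inv hne).differentiableWithinAt
  have hbdd : BddAbove (norm ∘ g '' (Metric.ball (0 : ℂ) ρ \ {0})) := by
    refine ⟨ε⁻¹, ?_⟩
    rintro _ ⟨u, hu, rfl⟩
    simp only [Function.comp_apply, hg, norm_inv]
    exact inv_anti₀ hε (hR u hu)
  have hnh := Metric.ball_mem_nhds (0 : ℂ) hρ0
  have hupd := Complex.differentiableOn_update_limUnder_of_bddAbove hnh hdiff hbdd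
  have hmer : MeromorphicAt g 0 := by
    refine (hupd.analyticAt hnh).meromorphicAt.congr ?_
    filter_upwards [self_mem_nhdsWithin] with u hu
    exact Function.update_of_ne hu _ _
  have hmer2 : MeromorphicAt (fun u => (g u)⁻¹ + w) 0 := hmer.inv.add (MeromorphicAt.const w 0)
  have e : (fun u => (g u)⁻¹ + w) = fun u => f u⁻¹ := by
    funext u
    simp [hg]
  rw [e] at hmer2
  obtain ⟨n, hn⟩ := hmer2
  have hcont := hn.continuousAt
  have hev := hcont.norm.eventually_lt continuousAt_const
    (lt_add_one ‖(fun z : ℂ => (z - 0) ^ n • f z⁻¹) 0‖)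
  set C := ‖(fun z : ℂ => (z - 0) ^ n • f z⁻¹) 0‖ + 1 with hC
  obtain ⟨r, hr0, hr⟩ := Metric.eventually_nhds_iff.1 hev
  refine polynomial_of_growth n f hf (r⁻¹ + 1) C fun z hz => ?_
  have hz0 : 0 < ‖z‖ := lt_of_lt_of_le (by positivity) hz
  have hzr : dist z⁻¹ 0 < r := by
    rw [dist_zero_right, norm_inv, inv_lt_comm₀ hz0 hr0]
    linarith
  have := (hr hzr).le
  simp only [sub_zero, inv_inv, smul_eq_mul, norm_mul, norm_pow, norm_inv] at this
  rw [inv_pow, inv_mul_le_iff₀ (by positivity)] at this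
  linarith

theorem exists_bad_set (f : ℂ → ℂ) (hf : Differentiable ℂ f)
    (hp : ¬ ∃ p : Polynomial ℂ, ∀ z, f z = p.eval z) :
    ∃ X : Set ℂ, NC 0 dist X ∧ ¬ NC 0 dist (f '' X) := by
  have hd : ∀ (R : ℝ) (w : ℂ) (ε : ℝ), 0 < ε → ∃ z, R ≤ ‖z‖ ∧ ‖f z - w‖ < ε := by
    intro R w ε hε
    by_contra hcon
    push Not at hcon
    exact hp (polynomial_of_not_dense f hf R w ε hε hcon)
  have hd' : ∀ (R : ℝ) (n : ℕ), ∃ z, R ≤ ‖z‖ ∧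
      ‖f z - TopologicalSpace.denseSeq ℂ (Nat.unpair n).1‖ < 1 / ((n : ℝ) + 1) :=
    fun R n => hd R _ _ (by positivity)
  choose F hF1 hF2 using hd'
  let z : ℕ → ℂ := fun n => Nat.rec (F 0 0) (fun n w => F (2 * ‖w‖) (n + 1)) n
  have hz : ∀ n, ‖f (z n) - TopologicalSpace.denseSeq ℂ (Nat.unpair n).1‖ < 1 / ((n : ℝ) + 1) := by
    intro n
    cases n with
    | zero => exact hF2 0 0
    | succ n => exact hF2 (2 * ‖z n‖) (n + 1)
  have hg : ∀ n, 2 * ‖z n‖ ≤ ‖z (n + 1)‖ := fun n => hF1 (2 * ‖z n‖) (n + 1)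
  refine ⟨Set.range z, NC_zero_of_growth z ?_, not_NC_zero ?_⟩
  · intro m n hmn
    induction n, hmn using Nat.le_induction with
    | base => exact hg m
    | succ n _ ih =>
      have := hg n
      have := norm_nonneg (z n)
      linarith
  · intro t ε hε _ _
    obtain ⟨i, hi⟩ := Metric.denseRange_iff.1 (TopologicalSpace.denseRange_denseSeq ℂ) (t : ℂ)
      (ε / 2) (by positivity)
    obtain ⟨j, hj⟩ := exists_nat_one_div_lt (half_pos hε)
    refine ⟨f (z (Nat.pair i j)), ⟨_, ⟨_, rfl⟩, rfl⟩, ?_⟩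
    have h1 := hz (Nat.pair i j)
    rw [Nat.unpair_pair, ← dist_eq_norm] at h1
    have h2 : (1 : ℝ) / ((Nat.pair i j : ℕ) + 1) ≤ 1 / (j + 1) := by
      have : (j : ℝ) ≤ (Nat.pair i j : ℕ) := by exact_mod_cast Nat.right_le_pair i j
      gcongr
    have h3 := dist_triangle (f (z (Nat.pair i j))) (TopologicalSpace.denseSeq ℂ i) t
    simp only at h1
    rw [dist_comm] at hi
    linarith

/-- An entire function is a non-constant polynomial if and only if it
preserves the Nagata dimension of every subset of `ℂ`. -/
theorem entire_polynomial_iff_preserves_nagataDim (f : ℂ → ℂ) (hf : Differentiable ℂ f) :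
    (∃ p : Polynomial ℂ, 1 ≤ p.natDegree ∧ ∀ z : ℂ, f z = p.eval z) ↔
      (∀ X : Set ℂ, nagataDim (f '' X) = nagataDim X) := by
  constructor
  · rintro ⟨p, hp, hfp⟩ X
    obtain rfl : f = fun z => p.eval z := funext hfp
    rw [nagataDim_eq, nagataDim_eq]
    congr 1
    ext N
    have := fun n => good_univ p hp n X (Set.subset_univ _)
    simp only [Set.mem_ofPred_eq, this]
  · intro h
    by_cases hex : ∃ p : Polynomial ℂ, ∀ z, f z = p.eval z
    · obtain ⟨p, hp⟩ := hex
      refine ⟨p, ?_, hp⟩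
      by_contra hdeg
      have hdeg' : p.natDegree = 0 := by omega
      obtain ⟨a, rfl⟩ := Polynomial.natDegree_eq_zero.1 hdeg'
      have h1 := h Set.univ
      have h2 : nagataDim (f '' Set.univ) = 0 := by
        rw [nagataDim_eq_zero_iff]
        refine NC.of_subsingleton ?_
        rintro _ ⟨x, _, rfl⟩ _ ⟨y, _, rfl⟩
        rw [hp, hp, Polynomial.eval_C, Polynomial.eval_C]
      rw [h2, eq_comm, nagataDim_eq_zero_iff] at h1
      exact not_NC_zero (fun t ε hε _ _ => ⟨t, Set.mem_univ _, by rwa [dist_self]⟩) h1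
    · exfalso
      obtain ⟨X, hX, hX'⟩ := exists_bad_set f hf hex
      rw [← nagataDim_eq_zero_iff] at hX hX'
      exact hX' ((h X).trans hX)
end

section
/- Let Ω ⊆ ℂ be a domain (open connected set) and let f : Ω → ℂ be a non-constant holomorphic function on Ω. Then for every compact set E ⊆ Ω, dim_N E = dim_N f(E) (with the Euclidean metric). -/
open Set Metric

namespace NagataAux

/-- the covering property at level `n` (multiplicity version) -/
def PN (n : ℕ) (X : Set ℂ) : Prop :=
  ∃ c : ℝ, 0 < c ∧ ∀ s : ℝ, 0 < s →
    ∃ B : Set (Set ℂ), (∀ b ∈ B, b ⊆ X) ∧ X ⊆ ⋃₀ B ∧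
      (∀ b ∈ B, IsBoundedBy dist b (c * s)) ∧
      ∀ T ⊆ X, IsBoundedBy dist T s → {b ∈ B | (T ∩ b).Nonempty}.encard ≤ (n : ℕ∞) + 1

/-- the colored version, for the pulled back distance along `g` -/
def QN (n : ℕ) (g : ℂ → ℂ) (X : Set ℂ) : Prop :=
  ∃ c : ℝ, 0 < c ∧ ∀ s : ℝ, 0 < s → ∃ (col : ℂ → Fin (n + 1)) (L : Type) (lab : ℂ → L),
    ∀ x ∈ X, ∀ y ∈ X, col x = col y →
      (dist (g x) (g y) ≤ s → lab x = lab y) ∧ (lab x = lab y → dist (g x) (g y) ≤ c * s)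

lemma QN.mono {n : ℕ} {g : ℂ → ℂ} {X Y : Set ℂ} (h : QN n g Y) (hXY : X ⊆ Y) : QN n g X := by
  obtain ⟨c, hc, h⟩ := h
  refine ⟨c, hc, fun s hs => ?_⟩
  obtain ⟨col, L, lab, h⟩ := h s hs
  exact ⟨col, L, lab, fun x hx y hy => h x (hXY hx) y (hXY hy)⟩

lemma QN.singleton (n : ℕ) (g : ℂ → ℂ) (X : Set ℂ) (hX : X.Subsingleton) : QN n g X := by
  refine ⟨1, one_pos, fun s hs => ⟨fun _ => 0, Unit, fun _ => (), fun x hx y hy _ => ?_⟩⟩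
  have := hX hx hy
  subst this
  simp [hs.le]

lemma QN_image (n : ℕ) (f : ℂ → ℂ) (X : Set ℂ) : QN n id (f '' X) ↔ QN n f X := by
  constructor
  · rintro ⟨c, hc, h⟩
    refine ⟨c, hc, fun s hs => ?_⟩
    obtain ⟨col, L, lab, h⟩ := h s hs
    exact ⟨col ∘ f, L, lab ∘ f, fun x hx y hy => h _ (mem_image_of_mem f hx) _ (mem_image_of_mem f hy)⟩
  · rintro ⟨c, hc, h⟩
    refine ⟨c, hc, fun s hs => ?_⟩
    obtain ⟨col, L, lab, h⟩ := h s hs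
    have : ∀ y : ℂ, ∃ x : ℂ, y ∈ f '' X → x ∈ X ∧ f x = y := by
      intro y
      by_cases hy : y ∈ f '' X
      · obtain ⟨x, hx⟩ := hy
        exact ⟨x, fun _ => hx⟩
      · exact ⟨0, fun h => absurd h hy⟩
    choose k hk using this
    refine ⟨col ∘ k, L, lab ∘ k, fun x hx y hy hxy => ?_⟩
    have := h _ (hk x hx).1 _ (hk y hy).1 hxy
    rw [(hk x hx).2, (hk y hy).2] at this
    exact this

lemma QN.toPN {n : ℕ} {X : Set ℂ} (h : QN n id X) : PN n X := by
  obtain ⟨c, hc, h⟩ := h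
  refine ⟨c, hc, fun s hs => ?_⟩
  obtain ⟨col, L, lab, h⟩ := h s hs
  set cl : ℂ → Set ℂ := fun x => {y ∈ X | col y = col x ∧ lab y = lab x} with hcl
  refine ⟨cl '' X, ?_, ?_, ?_, ?_⟩
  · rintro _ ⟨x, hx, rfl⟩ y hy
    exact hy.1
  · intro x hx
    exact ⟨cl x, mem_image_of_mem _ hx, hx, rfl, rfl⟩
  · rintro _ ⟨x, hx, rfl⟩ y hy z hz
    exact (h y hy.1 z hz.1 (hy.2.1.trans hz.2.1.symm)).2 (hy.2.2.trans hz.2.2.symm)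
  · intro T hT hTs
    set S : Set (Set ℂ) := {b ∈ cl '' X | (T ∩ b).Nonempty} with hS
    have h1 : ∀ b ∈ S, ∃ x, x ∈ T ∧ b = cl x := by
      rintro b ⟨⟨x, hx, rfl⟩, y, hyT, hy⟩
      refine ⟨y, hyT, ?_⟩
      ext z
      simp only [hcl, mem_ofPred_eq] at hy ⊢
      rw [hy.2.1, hy.2.2]
    choose! p hp1 hp2 using h1
    have hinj : InjOn (fun b => col (p b)) S := by
      intro b hb b' hb' hbb
      have hbb' : col (p b) = col (p b') := hbb
      have hl := (h _ (hT (hp1 b hb)) _ (hT (hp1 b' hb')) hbb).1 (hTs _ (hp1 b hb) _ (hp1 b' hb'))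
      rw [hp2 b hb, hp2 b' hb']
      ext z
      simp only [hcl, mem_ofPred_eq]
      rw [hbb', hl]
    rw [← hinj.encard_image]
    calc _ ≤ (univ : Set (Fin (n+1))).encard := encard_le_encard (subset_univ _)
      _ = _ := by simp

lemma PN.toQN {n : ℕ} {X : Set ℂ} (h : PN n X) : QN n id X := by
  obtain ⟨c, hc, h⟩ := h
  refine ⟨(1 + c) * (4 * (n + 1)), by positivity, fun s hs => ?_⟩
  set s' : ℝ := 4 * (n + 1) * s with hs'
  obtain ⟨B, hBX, hXB, hBc, hB⟩ := h s' (by positivity)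
  have hcnt : ∀ x ∈ X, {b ∈ B | b.Nonempty ∧ infDist x b < s' / 2}.encard ≤ (n : ℕ∞) + 1 := by
    intro x hx
    refine le_trans (encard_le_encard ?_) (hB (X ∩ ball x (s' / 2)) inter_subset_left ?_)
    · rintro b ⟨hb, hne, hlt⟩
      obtain ⟨y, hy, hxy⟩ := (infDist_lt_iff hne).1 hlt
      exact ⟨hb, y, ⟨hBX b hb hy, by rwa [mem_ball']⟩, hy⟩
    · rintro y ⟨_, hy⟩ z ⟨_, hz⟩
      rw [mem_ball] at hy
      rw [mem_ball'] at hz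
      linarith [dist_triangle y x z]
  have hband : ∀ x : ℂ, ∃ i : Fin (n + 1), x ∈ X → ∀ b ∈ B, b.Nonempty →
      ¬ ((i : ℝ) * (2 * s) < infDist x b ∧ infDist x b < (i + 1) * (2 * s)) := by
    intro x
    by_cases hx : x ∈ X
    swap
    · exact ⟨0, fun h => absurd h hx⟩
    by_contra! hcon
    have hcon' : ∀ i : Fin (n + 1), ∃ b ∈ B, b.Nonempty ∧ (i : ℝ) * (2 * s) < infDist x b ∧
        infDist x b < (i + 1) * (2 * s) := fun i => (hcon i).2
    choose β hβ1 hβ2 hβ3 hβ4 using hcon'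
    obtain ⟨t, htB, hxt⟩ := hXB hx
    have hinj : Function.Injective β := by
      intro i j hij
      have h1 := hβ3 i
      have h2 := hβ4 i
      have h3 := hβ3 j
      have h4 := hβ4 j
      rw [hij] at h1 h2
      have h5 : (i : ℝ) < j + 1 := lt_of_mul_lt_mul_right (h1.trans h4) (by positivity)
      have h6 : (j : ℝ) < i + 1 := lt_of_mul_lt_mul_right (h3.trans h2) (by positivity)
      have h5' : (i : ℕ) < j + 1 := by exact_mod_cast h5
      have h6' : (j : ℕ) < i + 1 := by exact_mod_cast h6
      ext
      omega
    set S := {b ∈ B | b.Nonempty ∧ infDist x b < s' / 2} with hS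
    have htS : t ∉ range β := by
      rintro ⟨i, rfl⟩
      have h1 := hβ3 i
      rw [infDist_zero_of_mem hxt] at h1
      have : (0 : ℝ) ≤ (i : ℝ) * (2 * s) := by positivity
      linarith
    have hsub : insert t (range β) ⊆ S := by
      rintro b (rfl | ⟨i, rfl⟩)
      · refine ⟨htB, ⟨x, hxt⟩, ?_⟩
        rw [infDist_zero_of_mem hxt]
        positivity
      · refine ⟨hβ1 i, hβ2 i, (hβ4 i).trans_le ?_⟩
        have : ((i : ℕ) : ℝ) ≤ n := by exact_mod_cast Nat.lt_succ_iff.1 i.2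
        have : (i + 1 : ℝ) * (2 * s) ≤ (n + 1) * (2 * s) := by gcongr
        rw [hs']; linarith
    have h1 := (encard_le_encard hsub).trans (hcnt x hx)
    rw [encard_insert_of_notMem htS, ← image_univ, hinj.encard_image] at h1
    simp only [encard_univ, ENat.card_eq_coe_fintype_card, Fintype.card_fin] at h1
    norm_cast at h1
    omega
  choose col hcol using hband
  refine ⟨col, Set (Set ℂ), fun x => {b ∈ B | b.Nonempty ∧ infDist x b ≤ (col x : ℝ) * (2 * s)},
    fun x hx y hy hxy => ⟨fun hd => ?_, fun hl => ?_⟩⟩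
  · simp only [id] at hd
    have key : ∀ x ∈ X, ∀ y ∈ X, col x = col y → dist x y ≤ s → ∀ b ∈ B, b.Nonempty →
        infDist x b ≤ (col x : ℝ) * (2 * s) → infDist y b ≤ (col y : ℝ) * (2 * s) := by
      intro x hx y hy hxy hd b hb hne hle
      by_contra! hlt
      refine hcol y hy b hb hne ⟨hlt, ?_⟩
      rw [hxy] at hle
      have : infDist y b ≤ infDist x b + dist y x := infDist_le_infDist_add_dist
      rw [dist_comm] at this
      linarith
    ext b
    constructor
    · rintro ⟨h1, h2, h3⟩
      exact ⟨h1, h2, key x hx y hy hxy hd b h1 h2 h3⟩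
    · rintro ⟨h1, h2, h3⟩
      exact ⟨h1, h2, key y hy x hx hxy.symm (by rwa [dist_comm]) b h1 h2 h3⟩
  · simp only [id]
    obtain ⟨t, htB, hxt⟩ := hXB hx
    have h1 : t ∈ {b ∈ B | b.Nonempty ∧ infDist x b ≤ (col x : ℝ) * (2 * s)} := by
      refine ⟨htB, ⟨x, hxt⟩, ?_⟩
      rw [infDist_zero_of_mem hxt]
      positivity
    have h2 : t ∈ {b ∈ B | b.Nonempty ∧ infDist y b ≤ (col y : ℝ) * (2 * s)} := by
      have hl' : {b ∈ B | b.Nonempty ∧ infDist x b ≤ (col x : ℝ) * (2 * s)} =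
        {b ∈ B | b.Nonempty ∧ infDist y b ≤ (col y : ℝ) * (2 * s)} := hl
      rwa [← hl']
    obtain ⟨_, hne, h3⟩ := h2
    have h4 : infDist y t < (n + 1) * (2 * s) := by
      refine h3.trans_lt ?_
      have : ((col y : ℕ) : ℝ) < n + 1 := by exact_mod_cast (col y).2
      gcongr
    obtain ⟨q, hq, hyq⟩ := (infDist_lt_iff hne).1 h4
    have h5 := hBc t htB x hxt q hq
    have h6 := dist_triangle_right x y q
    have h7 : (0 : ℝ) ≤ (n + 1) * s := by positivity
    calc dist x y ≤ c * s' + (n + 1) * (2 * s) := by linarith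
      _ ≤ _ := by rw [hs']; nlinarith

lemma PN_iff_QN (n : ℕ) (X : Set ℂ) : PN n X ↔ QN n id X := ⟨PN.toQN, QN.toPN⟩

lemma QN.union {n : ℕ} {g : ℂ → ℂ} {A B : Set ℂ} (hA : QN n g A) (hB : QN n g B) :
    QN n g (A ∪ B) := by
  classical
  obtain ⟨cA, hcA, hA⟩ := hA
  obtain ⟨cB, hcB, hB⟩ := hB
  refine ⟨2 * (1 + cA) + cB * (3 + 2 * cA), by positivity, fun s hs => ?_⟩
  obtain ⟨colA, LA, labA, hA⟩ := hA s hs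
  obtain ⟨colB, LB, labB, hB⟩ := hB ((3 + 2 * cA) * s) (by positivity)
  set col : ℂ → Fin (n + 1) := fun x => if x ∈ B then colB x else colA x with hcol
  have hcolB : ∀ x ∈ B, col x = colB x := fun x hx => by simp [hcol, hx]
  have hcolA : ∀ x, x ∉ B → col x = colA x := fun x hx => by simp [hcol, hx]
  set N : ℂ → ℂ → Prop := fun x b => b ∈ B ∧ colB b = col x ∧ (x = b ∨ (x ∉ B ∧ ∃ a ∈ A, a ∉ B ∧
    colA a = colA x ∧ labA a = labA x ∧ dist (g a) (g b) ≤ s)) with hN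
  have hNd : ∀ x ∈ A ∪ B, ∀ b, N x b → dist (g x) (g b) ≤ (1 + cA) * s := by
    rintro x hx b ⟨hb, hc, rfl | ⟨hxB, a, ha, haB, h1, h2, h3⟩⟩
    · rw [dist_self]; positivity
    · have hxA : x ∈ A := hx.resolve_right hxB
      have := (hA a ha x hxA h1).2 h2
      have h5 := dist_triangle_left (g x) (g b) (g a)
      linarith
  refine ⟨col, LA ⊕ LB, fun x => if h : ∃ b, N x b then Sum.inr (labB h.choose)
    else Sum.inl (labA x), fun x hx y hy hxy => ?_⟩
  have hmem : ∀ x ∈ A ∪ B, (¬ ∃ b, N x b) → x ∉ B ∧ x ∈ A := by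
    intro x hx h
    have hxB : x ∉ B := fun hxB => h ⟨x, hxB, (hcolB x hxB).symm, Or.inl rfl⟩
    exact ⟨hxB, hx.resolve_right hxB⟩
  have htrans : ∀ x ∈ A ∪ B, ∀ y ∈ A ∪ B, col x = col y → dist (g x) (g y) ≤ s →
      (∃ b, N x b) → ∃ b, N y b := by
    rintro x hx y hy hxy hd ⟨b, hb⟩
    by_contra hcon
    obtain ⟨hyB, hyA⟩ := hmem y hy hcon
    apply hcon
    by_cases hxB : x ∈ B
    · refine ⟨x, hxB, (hcolB x hxB).symm.trans hxy, Or.inr ⟨hyB, y, hyA, hyB, rfl, rfl, ?_⟩⟩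
      rwa [dist_comm]
    · have hxA := hx.resolve_right hxB
      obtain ⟨hbB, hc, rfl | ⟨_, a, ha, haB, h1, h2, h3⟩⟩ := hb
      · exact absurd hbB hxB
      · have hcA' : colA x = colA y := by rw [← hcolA x hxB, ← hcolA y hyB, hxy]
        have hl := (hA x hxA y hyA hcA').1 hd
        exact ⟨b, hbB, hc.trans hxy, Or.inr ⟨hyB, a, ha, haB, h1.trans hcA', h2.trans hl, h3⟩⟩
  have hpos : 0 ≤ cB * (3 + 2 * cA) * s := by positivity
  have hpos' : 0 ≤ cA * s := by positivity
  by_cases h1 : ∃ b, N x b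
  · by_cases h2 : ∃ b, N y b
    · simp only [h1, h2, dif_pos]
      have hx' := hNd x hx _ h1.choose_spec
      have hy' := hNd y hy _ h2.choose_spec
      obtain ⟨hb1, hc1, -⟩ := h1.choose_spec
      obtain ⟨hb2, hc2, -⟩ := h2.choose_spec
      have hBB := hB _ hb1 _ hb2 (hc1.trans (hxy.trans hc2.symm))
      generalize h1.choose = b1 at *
      generalize h2.choose = b2 at *
      constructor
      · intro hd
        rw [hBB.1]
        have e1 := dist_triangle4 (g b1) (g x) (g y) (g b2)
        rw [dist_comm (g b1)  (g x)] at e1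
        linarith
      · intro hl
        have := hBB.2 (Sum.inr_injective hl)
        have e1 := dist_triangle4 (g x) (g b1) (g b2) (g y)
        rw [dist_comm (g b2)  (g y)] at e1
        linarith
    · simp only [h1, h2, dif_pos, dif_neg, not_false_eq_true]
      refine ⟨fun hd => absurd (htrans x hx y hy hxy hd h1) h2, fun hl => by simp at hl⟩
  · by_cases h2 : ∃ b, N y b
    · simp only [h1, h2, dif_pos, dif_neg, not_false_eq_true]
      refine ⟨fun hd => absurd (htrans y hy x hx hxy.symm (by rwa [dist_comm]) h2) h1,
        fun hl => by simp at hl⟩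
    · simp only [h1, h2, dif_neg, not_false_eq_true]
      obtain ⟨hxB, hxA⟩ := hmem x hx h1
      obtain ⟨hyB, hyA⟩ := hmem y hy h2
      have := hA x hxA y hyA (by rw [← hcolA x hxB, ← hcolA y hyB, hxy])
      refine ⟨fun hd => by rw [this.1 hd], fun hl => ?_⟩
      have := this.2 (Sum.inl_injective hl)
      linarith

/-- transfer between two distances comparable on separated annuli -/
lemma QN.transfer {n : ℕ} {g g' : ℂ → ℂ} {A : Set ℂ} (hA : QN n g A) (j : ℂ → ℤ)
    (w R : ℤ → ℝ) (K : ℝ) (hK : 0 < K) (hw : ∀ i, 0 < w i) (hR : Monotone R)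
    (h1 : ∀ x ∈ A, ∀ y ∈ A, j x = j y → w (j x) * dist (g x) (g y) ≤ K * dist (g' x) (g' y))
    (h2 : ∀ x ∈ A, ∀ y ∈ A, j x = j y → dist (g' x) (g' y) ≤ K * (w (j x) * dist (g x) (g y)))
    (h3 : ∀ x ∈ A, ∀ y ∈ A, j x < j y → R (j y) ≤ dist (g' x) (g' y))
    (h4 : ∀ x ∈ A, ∀ y ∈ A, j x ≤ j y → dist (g' x) (g' y) ≤ K * R (j y)) :
    QN n g' A := by
  classical
  obtain ⟨c, hc, hA⟩ := hA
  refine ⟨K + K ^ 2 * c, by positivity, fun s hs => ?_⟩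
  have hA' : ∀ i : ℤ, _ := fun i => hA (K * s / w i) (by have := hw i; positivity)
  choose col L lab hA' using hA'
  have hbig : ∀ x ∈ A, ∀ y ∈ A, j x < j y → s < R (j y) → ¬ dist (g' x) (g' y) ≤ s :=
    fun x hx y hy hj hs' hd => by linarith [h3 x hx y hy hj]
  refine ⟨fun x => if R (j x) ≤ s then 0 else col (j x) x, Option (Σ i, L i),
    fun x => if R (j x) ≤ s then none else some ⟨j x, lab (j x) x⟩, fun x hx y hy hxy => ?_⟩
  have hKs : 0 ≤ K * s := by positivity
  have hKc : 0 ≤ K ^ 2 * c * s := by positivity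
  by_cases hx1 : R (j x) ≤ s
  · by_cases hy1 : R (j y) ≤ s
    · simp only [hx1, hy1, if_true, true_and, forall_const, implies_true]
      have : dist (g' x) (g' y) ≤ K * s := by
        rcases le_total (j x) (j y) with h | h
        · exact (h4 x hx y hy h).trans (by gcongr)
        · rw [dist_comm]
          exact (h4 y hy x hx h).trans (by gcongr)
      linarith
    · simp only [hx1, hy1, if_true, if_false]
      refine ⟨fun hd => absurd hd ?_, fun hl => by simp at hl⟩
      push Not at hy1
      exact hbig x hx y hy (hR.reflect_lt (by linarith)) hy1
  · by_cases hy1 : R (j y) ≤ s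
    · simp only [hx1, hy1, if_true, if_false]
      refine ⟨fun hd => absurd hd ?_, fun hl => by simp at hl⟩
      push Not at hx1
      rw [dist_comm]
      exact hbig y hy x hx (hR.reflect_lt (by linarith)) hx1
    · simp only [hx1, hy1, if_false] at hxy ⊢
      push Not at hx1 hy1
      have hw' := hw (j x)
      constructor
      · intro hd
        have hj : j x = j y := by
          rcases lt_trichotomy (j x) (j y) with h | h | h
          · exact absurd hd (hbig x hx y hy h hy1)
          · exact h
          · rw [dist_comm] at hd
            exact absurd hd (hbig y hy x hx h hx1)
        rw [← hj] at hxy ⊢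
        rw [(hA' (j x) x hx y hy hxy).1]
        rw [le_div_iff₀ hw']
        have := h1 x hx y hy hj
        nlinarith
      · intro hl
        have hl' := Option.some_injective _ hl
        have hj : j x = j y := congrArg Sigma.fst hl'
        rw [← hj] at hxy hl'
        have hl2 : lab (j x) x = lab (j x) y := by simpa using hl'
        have e1 := (hA' (j x) x hx y hy hxy).2 hl2
        have e2 := h2 x hx y hy hj
        have e3 : w (j x) * dist (g x) (g y) ≤ c * (K * s) := by
          calc _ ≤ w (j x) * (c * (K * s / w (j x))) := by gcongr
            _ = _ := by field_simp
        calc _ ≤ K * (c * (K * s)) := e2.trans (by gcongr)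
          _ ≤ _ := by nlinarith

/-- sets on which `f` preserves the property hereditarily -/
def Good (f : ℂ → ℂ) (S : Set ℂ) : Prop := ∀ n, ∀ A ⊆ S, QN n id A ↔ QN n f A

lemma Good.mono {f : ℂ → ℂ} {S T : Set ℂ} (h : Good f T) (hS : S ⊆ T) : Good f S :=
  fun n A hA => h n A (hA.trans hS)

lemma Good.union {f : ℂ → ℂ} {S T : Set ℂ} (hS : Good f S) (hT : Good f T) : Good f (S ∪ T) := by
  intro n A hA
  have e : A = (A ∩ S) ∪ (A ∩ T) := by rw [← inter_union_distrib_left, inter_eq_left.2 hA]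
  constructor
  · intro h
    rw [e]
    exact ((hS n _ inter_subset_right).1 (h.mono inter_subset_left)).union
      ((hT n _ inter_subset_right).1 (h.mono inter_subset_left))
  · intro h
    rw [e]
    exact ((hS n _ inter_subset_right).2 (h.mono inter_subset_left)).union
      ((hT n _ inter_subset_right).2 (h.mono inter_subset_left))

lemma Good.subsingleton (f : ℂ → ℂ) {S : Set ℂ} (hS : S.Subsingleton) : Good f S :=
  fun n A hA => ⟨fun _ => QN.singleton n f A (hS.anti hA), fun _ => QN.singleton n id A (hS.anti hA)⟩

/-- annuli separated by gaps -/
lemma good_of_gaps {f : ℂ → ℂ} {S : Set ℂ} (z : ℂ) (m : ℕ) (C₁ C₂ : ℝ) (hC₁ : 0 < C₁)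
    (hC₂ : 0 < C₂) (hz : z ∉ S)
    (hlo : ∀ x ∈ S, ∀ y ∈ S, dist x z ≤ dist y z →
      C₁ * (dist y z ^ m * dist x y) ≤ dist (f x) (f y))
    (hup : ∀ x ∈ S, ∀ y ∈ S, dist x z ≤ dist y z →
      dist (f x) (f y) ≤ C₂ * (dist y z ^ m * dist x y))
    (hgap : ∀ x ∈ S, ∀ y ∈ S, Int.log 2 (dist x z) < Int.log 2 (dist y z) →
      Int.log 2 (dist x z) + 2 ≤ Int.log 2 (dist y z)) : Good f S := by
  set j : ℂ → ℤ := fun x => Int.log 2 (dist x z) with hj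
  have hpos : ∀ x ∈ S, 0 < dist x z := fun x hx => dist_pos.2 (fun h => hz (h ▸ hx))
  set W : ℤ → ℝ := fun i => (2 : ℝ) ^ i with hW
  have hWpos : ∀ i, 0 < W i := fun i => by positivity
  have hWmono : Monotone W := fun a b hab => zpow_le_zpow_right₀ (by norm_num) hab
  have hl : ∀ x ∈ S, W (j x) ≤ dist x z := fun x hx => by
    simpa using Int.zpow_log_le_self (b := 2) (by norm_num) (hpos x hx)
  have hu : ∀ x ∈ S, dist x z ≤ 2 * W (j x) := fun x hx => by
    have := (Int.lt_zpow_succ_log_self (b := 2) (by norm_num) (dist x z)).le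
    rw [zpow_add₀ (by norm_num)] at this
    simp only [hW, hj]
    push_cast at this
    linarith
  have hle : ∀ x ∈ S, ∀ y ∈ S, j x < j y → dist x z ≤ dist y z / 2 := by
    intro x hx y hy h
    have h2 := hWmono (hgap x hx y hy h)
    have h3 : W (j x + 2) = 4 * W (j x) := by
      simp only [hW]
      rw [zpow_add₀ (by norm_num)]; norm_num; ring
    change W (j x + 2) ≤ W (j y) at h2
    linarith [hl y hy, hu x hx]
  have hd1 : ∀ x ∈ S, ∀ y ∈ S, j x < j y → W (j y) / 2 ≤ dist x y := by
    intro x hx y hy h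
    have := dist_triangle_left y z x
    linarith [hle x hx y hy h, hl y hy]
  have hdu : ∀ x ∈ S, ∀ y ∈ S, j x ≤ j y → dist x y ≤ 4 * W (j y) := by
    intro x hx y hy h
    have := dist_triangle_right x y z
    linarith [hu x hx, hu y hy, hWmono h]
  have hlo' : ∀ x ∈ S, ∀ y ∈ S, j x ≤ j y → C₁ * (W (j y) ^ m * dist x y) ≤ dist (f x) (f y) := by
    intro x hx y hy h
    rcases le_total (dist x z) (dist y z) with h' | h'
    · refine le_trans ?_ (hlo x hx y hy h')
      have := hl y hy
      have := hWpos (j y)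
      gcongr
    · have h2 := hlo y hy x hx h'
      rw [dist_comm (f x), dist_comm x]
      refine le_trans ?_ h2
      have := (hl y hy).trans h'
      have := hWpos (j y)
      gcongr
  have hup' : ∀ x ∈ S, ∀ y ∈ S, j x ≤ j y →
      dist (f x) (f y) ≤ C₂ * ((2 * W (j y)) ^ m * dist x y) := by
    intro x hx y hy h
    rcases le_total (dist x z) (dist y z) with h' | h'
    · refine (hup x hx y hy h').trans ?_
      have := hu y hy
      gcongr
    · have h2 := hup y hy x hx h'
      rw [dist_comm (f x), dist_comm x]
      refine h2.trans ?_
      have := hu x hx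
      have := hWmono h
      have : dist x z ≤ 2 * W (j y) := by linarith
      gcongr
  intro n A hA
  constructor
  · intro h
    refine h.transfer j (fun i => W i ^ m) (fun i => C₁ / 2 * W i ^ (m + 1))
      (1 / C₁ + C₂ * 2 ^ m + 8 * C₂ * 2 ^ m / C₁) (by positivity) (fun i => pow_pos (hWpos i) m) ?_ ?_ ?_ ?_ ?_
    · intro a b hab
      have := hWmono hab
      have := hWpos a
      dsimp only
      gcongr
    · intro x hx y hy hxy
      have e := hlo' x (hA hx) y (hA hy) hxy.le
      rw [← hxy] at e
      simp only [id]
      calc _ = 1 / C₁ * (C₁ * (W (j x) ^ m * dist x y)) := by field_simp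
        _ ≤ 1 / C₁ * dist (f x) (f y) := by gcongr
        _ ≤ _ := by
          gcongr
          rw [add_assoc]
          exact le_add_of_nonneg_right (by positivity)
    · intro x hx y hy hxy
      have e := hup' x (hA hx) y (hA hy) hxy.le
      rw [← hxy] at e
      simp only [id]
      have := hWpos (j x)
      calc _ ≤ _ := e
        _ = C₂ * 2 ^ m * (W (j x) ^ m * dist x y) := by ring
        _ ≤ _ := by
          gcongr
          have : 0 < 1 / C₁ := by positivity
          have : 0 < 8 * C₂ * 2 ^ m / C₁ := by positivity
          linarith
    · intro x hx y hy hxy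
      have e := hlo' x (hA hx) y (hA hy) hxy.le
      have e2 := hd1 x (hA hx) y (hA hy) hxy
      have := hWpos (j y)
      refine le_trans ?_ e
      calc _ = C₁ * (W (j y) ^ m * (W (j y) / 2)) := by ring
        _ ≤ _ := by gcongr
    · intro x hx y hy hxy
      have e := hup' x (hA hx) y (hA hy) hxy
      have e2 := hdu x (hA hx) y (hA hy) hxy
      have := hWpos (j y)
      calc _ ≤ _ := e
        _ ≤ C₂ * ((2 * W (j y)) ^ m * (4 * W (j y))) := by gcongr
        _ = 8 * C₂ * 2 ^ m / C₁ * (C₁ / 2 * W (j y) ^ (m + 1)) := by field_simp; ring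
        _ ≤ _ := by
          gcongr
          exact le_add_of_nonneg_left (by positivity)
  · intro h
    refine h.transfer j (fun i => 1 / W i ^ m) (fun i => 1 / 2 * W i)
      (1 / C₁ + C₂ * 2 ^ m + 8) (by positivity) (fun i => by have := hWpos i; positivity) ?_ ?_ ?_ ?_ ?_
    · intro a b hab
      have := hWmono hab
      dsimp only
      gcongr
    · intro x hx y hy hxy
      have e := hup' x (hA hx) y (hA hy) hxy.le
      rw [← hxy] at e
      simp only [id]
      have := hWpos (j x)
      calc _ ≤ 1 / W (j x) ^ m * (C₂ * ((2 * W (j x)) ^ m * dist x y)) := by gcongr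
        _ = C₂ * 2 ^ m * dist x y := by rw [mul_pow]; field_simp
        _ ≤ _ := by
          gcongr
          have : 0 < 1 / C₁ := by positivity
          linarith
    · intro x hx y hy hxy
      have e := hlo' x (hA hx) y (hA hy) hxy.le
      rw [← hxy] at e
      simp only [id]
      have := hWpos (j x)
      calc _ = 1 / C₁ * (1 / W (j x) ^ m * (C₁ * (W (j x) ^ m * dist x y))) := by field_simp
        _ ≤ 1 / C₁ * (1 / W (j x) ^ m * dist (f x) (f y)) := by gcongr
        _ ≤ _ := by
          gcongr
          rw [add_assoc]
          exact le_add_of_nonneg_right (by positivity)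
    · intro x hx y hy hxy
      have e2 := hd1 x (hA hx) y (hA hy) hxy
      simp only [id]
      linarith
    · intro x hx y hy hxy
      have e2 := hdu x (hA hx) y (hA hy) hxy
      have := hWpos (j y)
      simp only [id]
      calc _ ≤ _ := e2
        _ = 8 * (1 / 2 * W (j y)) := by ring
        _ ≤ _ := by
          gcongr
          exact le_add_of_nonneg_left (by positivity)

lemma good_of_bounds {f : ℂ → ℂ} {S : Set ℂ} (z : ℂ) (m : ℕ) (C₁ C₂ : ℝ) (hC₁ : 0 < C₁)
    (hC₂ : 0 < C₂) (hz : z ∉ S)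
    (hlo : ∀ x ∈ S, ∀ y ∈ S, dist x z ≤ dist y z →
      C₁ * (dist y z ^ m * dist x y) ≤ dist (f x) (f y))
    (hup : ∀ x ∈ S, ∀ y ∈ S, dist x z ≤ dist y z →
      dist (f x) (f y) ≤ C₂ * (dist y z ^ m * dist x y)) : Good f S := by
  have e : S ⊆ {x ∈ S | Even (Int.log 2 (dist x z))} ∪ {x ∈ S | ¬ Even (Int.log 2 (dist x z))} := by
    intro x hx
    by_cases h : Even (Int.log 2 (dist x z))
    · exact Or.inl ⟨hx, h⟩
    · exact Or.inr ⟨hx, h⟩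
  refine Good.mono (Good.union ?_ ?_) e
  · refine good_of_gaps z m C₁ C₂ hC₁ hC₂ (fun h => hz h.1)
      (fun x hx y hy => hlo x hx.1 y hy.1) (fun x hx y hy => hup x hx.1 y hy.1) ?_
    rintro x ⟨_, a, ha⟩ y ⟨_, b, hb⟩ h
    omega
  · refine good_of_gaps z m C₁ C₂ hC₁ hC₂ (fun h => hz h.1)
      (fun x hx y hy => hlo x hx.1 y hy.1) (fun x hx y hy => hup x hx.1 y hy.1) ?_
    rintro x ⟨_, ha⟩ y ⟨_, hb⟩ h
    rw [Int.not_even_iff_odd] at ha hb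
    obtain ⟨a, ha⟩ := ha
    obtain ⟨b, hb⟩ := hb
    omega

lemma norm_pow_sub_pow_le_of_unit {a u : ℂ} (ha : ‖a‖ = 1) (hu : ‖u‖ = 1) {δ : ℝ}
    (h : ‖a - u‖ ≤ δ) (k : ℕ) : ‖a ^ k - u ^ k‖ ≤ k * δ := by
  induction k with
  | zero => simp
  | succ k ih =>
    have e : a ^ (k + 1) - u ^ (k + 1) = (a ^ k - u ^ k) * a + u ^ k * (a - u) := by ring
    rw [e]
    refine (norm_add_le _ _).trans ?_
    rw [norm_mul, norm_mul, norm_pow, ha, hu]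
    push_cast
    simp only [one_pow, mul_one, one_mul]
    linarith

lemma pow_lower {x y u : ℂ} (hx : x ≠ 0) (hy : y ≠ 0) (hu : ‖u‖ = 1) (m : ℕ)
    (hxu : ‖x / ‖x‖ - u‖ ≤ 1 / (2 * (m + 1))) (hyu : ‖y / ‖y‖ - u‖ ≤ 1 / (2 * (m + 1))) :
    1 / 2 * (‖y‖ ^ m * ‖x - y‖) ≤ ‖x ^ (m + 1) - y ^ (m + 1)‖ := by
  set δ : ℝ := 1 / (2 * (m + 1)) with hδ
  set a : ℂ := x / ‖x‖ with ha
  set b : ℂ := y / ‖y‖ with hb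
  have hx0 : (‖x‖ : ℂ) ≠ 0 := by simpa using hx
  have hy0 : (‖y‖ : ℂ) ≠ 0 := by simpa using hy
  have ha1 : ‖a‖ = 1 := by simp [ha, hx]
  have hb1 : ‖b‖ = 1 := by simp [hb, hy]
  have hxa : x = ‖x‖ * a := by rw [ha]; field_simp
  have hyb : y = ‖y‖ * b := by rw [hb]; field_simp
  have hmδ : m * δ ≤ 1 / 2 := by
    rw [hδ, mul_one_div, div_le_div_iff₀ (by positivity) (by positivity)]
    linarith
  rw [← geom_sum₂_mul, norm_mul, ← mul_assoc]
  gcongr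
  simp only [Nat.add_sub_cancel]
  set T : ℝ := ∑ i ∈ Finset.range (m + 1), ‖x‖ ^ i * ‖y‖ ^ (m - i) with hT
  have hTy : ‖y‖ ^ m ≤ T := by
    have := Finset.single_le_sum (f := fun i => ‖x‖ ^ i * ‖y‖ ^ (m - i))
      (s := Finset.range (m + 1)) (fun i _ => by positivity) (Finset.mem_range.2 (Nat.succ_pos m))
    simpa using this
  have key : ‖(∑ i ∈ Finset.range (m + 1), x ^ i * y ^ (m - i)) - T * u ^ m‖ ≤ T * (m * δ) := by
    have e : (T : ℂ) * u ^ m =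
        ∑ i ∈ Finset.range (m + 1), (‖x‖ : ℂ) ^ i * (‖y‖ : ℂ) ^ (m - i) * u ^ m := by
      rw [hT]; push_cast; rw [Finset.sum_mul]
    rw [e, ← Finset.sum_sub_distrib, hT, Finset.sum_mul]
    refine norm_sum_le_of_le _ fun i hi => ?_
    have him : i + (m - i) = m := by
      have := Finset.mem_range.1 hi
      omega
    have e2 : x ^ i * y ^ (m - i) - (‖x‖ : ℂ) ^ i * (‖y‖ : ℂ) ^ (m - i) * u ^ m =
        ((‖x‖ : ℂ) ^ i * (‖y‖ : ℂ) ^ (m - i)) *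
          ((a ^ i - u ^ i) * b ^ (m - i) + u ^ i * (b ^ (m - i) - u ^ (m - i))) := by
      have e3 : u ^ m = u ^ i * u ^ (m - i) := by rw [← pow_add, him]
      have e4 : x ^ i = (‖x‖ : ℂ) ^ i * a ^ i := by exact (congrArg (· ^ i) hxa).trans (mul_pow _ _ _)
      have e5 : y ^ (m - i) = (‖y‖ : ℂ) ^ (m - i) * b ^ (m - i) := by exact (congrArg (· ^ (m - i)) hyb).trans (mul_pow _ _ _)
      rw [e3, e4, e5]; ring
    rw [e2, norm_mul, norm_mul, norm_pow, norm_pow, Complex.norm_real, Complex.norm_real,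
      norm_norm, norm_norm]
    gcongr
    refine (norm_add_le _ _).trans ?_
    rw [norm_mul, norm_mul, norm_pow, norm_pow, hb1, hu]
    simp only [one_pow, mul_one, one_mul]
    have h1 := norm_pow_sub_pow_le_of_unit ha1 hu hxu i
    have h2 := norm_pow_sub_pow_le_of_unit hb1 hu hyu (m - i)
    have h3 : (m : ℝ) = (i : ℝ) + ((m - i : ℕ) : ℝ) := by exact_mod_cast him.symm
    rw [h3]
    linarith
  have hT0 : 0 ≤ T := (pow_nonneg (norm_nonneg y) m).trans hTy
  have hTn : ‖(T : ℂ) * u ^ m‖ = T := by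
    rw [norm_mul, norm_pow, hu, one_pow, mul_one, Complex.norm_real, Real.norm_of_nonneg hT0]
  have h1 := norm_sub_norm_le ((T : ℂ) * u ^ m) (∑ i ∈ Finset.range (m + 1), x ^ i * y ^ (m - i))
  rw [norm_sub_rev, hTn] at h1
  have h2 : T * (m * δ) ≤ T * (1 / 2) := mul_le_mul_of_nonneg_left hmδ hT0
  linarith

lemma good_local {f : ℂ → ℂ} {z : ℂ} (hf : AnalyticAt ℂ f z)
    (hd : ¬ ∀ᶠ w in nhds z, deriv f w = 0) : ∃ r > 0, Good f (ball z r) := by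
  have hd' : ∃ m : ℕ, ∃ H : ℂ → ℂ, AnalyticAt ℂ H z ∧ H z ≠ 0 ∧
      ∀ᶠ w in nhds z, deriv f w = (w - z) ^ m • H w :=
    hf.deriv.exists_eventuallyEq_pow_smul_nonzero_iff.2 hd
  obtain ⟨m, H, hH, hHz, hev⟩ := hd'
  set a := ‖H z‖ with ha
  have ha0 : 0 < a := norm_pos_iff.2 hHz
  set ε : ℝ := a / (4 * (m + 1)) with hε
  have hε0 : 0 < ε := by positivity
  have hεa : ε ≤ a := div_le_self ha0.le (by linarith [(Nat.cast_nonneg m : (0 : ℝ) ≤ m)])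
  have hHc : ∀ᶠ w in nhds z, dist (H w) (H z) < ε :=
    Metric.tendsto_nhds.1 hH.continuousAt ε hε0
  have hdf : ∀ᶠ w in nhds z, DifferentiableAt ℂ f w :=
    hf.eventually_analyticAt.mono fun w hw => hw.differentiableAt
  obtain ⟨r, hr, hball⟩ := Metric.eventually_nhds_iff_ball.1 (hev.and (hHc.and hdf))
  refine ⟨r, hr, ?_⟩
  set p : Set ℂ → Prop := fun U => Good f {w | w ∈ ball z r ∧ w ≠ z ∧ (w - z) / ‖w - z‖ ∈ U} with hp
  have hps : p (sphere (0 : ℂ) 1) := by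
    refine (isCompact_sphere (0 : ℂ) 1).induction_on (p := p) ?_ ?_ ?_ ?_
    · exact Good.subsingleton f (fun x hx => by simp at hx)
    · intro s t hst ht
      exact ht.mono fun w hw => ⟨hw.1, hw.2.1, hst hw.2.2⟩
    · intro s t hs ht
      refine (hs.union ht).mono fun w hw => ?_
      rcases hw.2.2 with h | h
      · exact Or.inl ⟨hw.1, hw.2.1, h⟩
      · exact Or.inr ⟨hw.1, hw.2.1, h⟩
    · intro u hu
      have hu1 : ‖u‖ = 1 := by simpa using hu
      refine ⟨closedBall u (1 / (2 * (m + 1))),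
        mem_nhdsWithin_of_mem_nhds (closedBall_mem_nhds u (by positivity)), ?_⟩
      refine good_of_bounds z m (a / (4 * (m + 1))) (2 * a) (by positivity) (by positivity)
        (fun h => h.2.1 rfl) ?_ ?_
      · rintro x ⟨hxb, hxz, hxu⟩ y ⟨hyb, hyz, hyu⟩ hxy
        rw [mem_closedBall, dist_eq_norm] at hxu hyu
        have hpl := pow_lower (sub_ne_zero.2 hxz) (sub_ne_zero.2 hyz) hu1 m hxu hyu
        set G : ℂ → ℂ := fun w => H z / (m + 1) * (w - z) ^ (m + 1) with hG
        have hm1 : (m + 1 : ℂ) ≠ 0 := by exact_mod_cast Nat.succ_ne_zero m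
        have hGd : ∀ w, HasDerivAt G (H z * (w - z) ^ m) w := by
          intro w
          have := (((hasDerivAt_id w).sub_const z).pow (m + 1)).const_mul (H z / (m + 1))
          refine this.congr_deriv ?_
          simp
          field_simp
        have hsub : closedBall z (dist y z) ⊆ ball z r := closedBall_subset_ball (mem_ball.1 hyb)
        have hmv := (convex_closedBall z (dist y z)).norm_image_sub_le_of_norm_deriv_le
          (f := fun w => f w - G w) (C := dist y z ^ m * ε) (𝕜 := ℂ)
          (fun w hw => (hball w (hsub hw)).2.2.sub (hGd w).differentiableAt) ?_
          (mem_closedBall.2 le_rfl : y ∈ closedBall z (dist y z)) (mem_closedBall.2 hxy)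
        · have e1 : G x - G y = H z / (m + 1) * ((x - z) ^ (m + 1) - (y - z) ^ (m + 1)) := by
            simp only [hG]; ring
          have e2 : a / (m + 1) * (1 / 2 * (dist y z ^ m * dist x y)) ≤ ‖G x - G y‖ := by
            rw [e1, norm_mul, norm_div, dist_eq_norm, dist_eq_norm]
            have : ‖(m + 1 : ℂ)‖ = m + 1 := by
              have := Complex.norm_natCast (m + 1)
              push_cast at this
              exact this
            rw [this, sub_sub_sub_cancel_right] at *
            gcongr
          have e3 : ‖G x - G y‖ ≤ ‖f x - f y‖ + ‖f x - G x - (f y - G y)‖ := by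
            have : G x - G y = (f x - f y) - (f x - G x - (f y - G y)) := by ring
            rw [this]
            exact norm_sub_le _ _
          have e4 : a / (m + 1) * (1 / 2 * (dist y z ^ m * dist x y)) =
            2 * (ε * (dist y z ^ m * dist x y)) := by rw [hε]; field_simp; ring
          have e5 : dist y z ^ m * ε * ‖x - y‖ = ε * (dist y z ^ m * dist x y) := by
            rw [dist_eq_norm x y]; ring
          rw [e5] at hmv
          rw [dist_eq_norm (f x)]
          linarith
        · intro w hw
          obtain ⟨h1, h2, h3⟩ := hball w (hsub hw)
          have : deriv (fun w => f w - G w) w = (w - z) ^ m * (H w - H z) := by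
            rw [(h3.hasDerivAt.fun_sub (hGd w)).deriv, h1, smul_eq_mul]; ring
          rw [this, norm_mul, norm_pow, ← dist_eq_norm, ← dist_eq_norm]
          have := mem_closedBall.1 hw
          gcongr
      · rintro x ⟨hxb, hxz, hxu⟩ y ⟨hyb, hyz, hyu⟩ hxy
        have hsub : closedBall z (dist y z) ⊆ ball z r := closedBall_subset_ball (mem_ball.1 hyb)
        have hmv := (convex_closedBall z (dist y z)).norm_image_sub_le_of_norm_deriv_le
          (f := f) (C := dist y z ^ m * (2 * a)) (𝕜 := ℂ)
          (fun w hw => (hball w (hsub hw)).2.2) ?_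
          (mem_closedBall.2 le_rfl : y ∈ closedBall z (dist y z)) (mem_closedBall.2 hxy)
        · rw [dist_eq_norm (f x), dist_eq_norm x]
          refine hmv.trans (le_of_eq ?_)
          ring
        · intro w hw
          obtain ⟨h1, h2, h3⟩ := hball w (hsub hw)
          rw [h1, norm_smul, norm_pow, ← dist_eq_norm]
          have h4 := mem_closedBall.1 hw
          have h5 : ‖H w‖ ≤ 2 * a := by
            rw [dist_eq_norm] at h2
            have := norm_sub_norm_le (H w) (H z)
            linarith
          gcongr
  refine (hps.union (Good.subsingleton f (subsingleton_singleton (a := z)))).mono fun w hw => ?_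
  by_cases hwz : w = z
  · exact Or.inr hwz
  · refine Or.inl ⟨hw, hwz, ?_⟩
    have : w - z ≠ 0 := sub_ne_zero.2 hwz
    simp [this]

lemma good_compact {Ω : Set ℂ} (hΩo : IsOpen Ω) (hΩc : IsConnected Ω) {f : ℂ → ℂ}
    (hf : DifferentiableOn ℂ f Ω) (hnc : ¬ ∃ w : ℂ, ∀ z ∈ Ω, f z = w)
    {E : Set ℂ} (hE : E ⊆ Ω) (hEc : IsCompact E) : Good f E := by
  have han : AnalyticOnNhd ℂ f Ω := hf.analyticOnNhd hΩo
  refine hEc.induction_on (p := Good f) (Good.subsingleton f subsingleton_empty)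
    (fun s t hst ht => ht.mono hst) (fun s t hs ht => hs.union ht) fun z hz => ?_
  obtain ⟨r, hr, hg⟩ := good_local (han z (hE hz)) (fun h => by
    have h0 : EqOn (deriv f) 0 Ω :=
      han.deriv.eqOn_zero_of_preconnected_of_eventuallyEq_zero hΩc.isPreconnected (hE hz) h
    refine hnc ⟨f z, fun w hw => ?_⟩
    exact hΩo.is_const_of_deriv_eq_zero hΩc.isPreconnected hf h0 hw (hE hz))
  exact ⟨ball z r, mem_nhdsWithin_of_mem_nhds (ball_mem_nhds z hr), hg⟩

end NagataAux

/-- **Statement 14.** A non-constant holomorphic function on a planar domain preserves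
the Nagata dimension of every compact subset of the domain. -/
theorem holomorphic_preserves_nagataDim_compact (Ω : Set ℂ) (hΩo : IsOpen Ω)
    (hΩc : IsConnected Ω) (f : ℂ → ℂ) (hf : DifferentiableOn ℂ f Ω)
    (hnc : ¬ ∃ w : ℂ, ∀ z ∈ Ω, f z = w)
    (E : Set ℂ) (hE : E ⊆ Ω) (hEc : IsCompact E) :
    nagataDim E = nagataDim (f '' E) := by
  have key : ∀ n, NagataAux.PN n E ↔ NagataAux.PN n (f '' E) := fun n => by
    rw [NagataAux.PN_iff_QN, NagataAux.PN_iff_QN, NagataAux.QN_image]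
    exact NagataAux.good_compact hΩo hΩc hf hnc hE hEc n E Subset.rfl
  unfold nagataDim nagataDimWith
  congr 1
  ext N
  exact exists_congr fun n => and_congr_right fun _ => key n
end
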